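/- The family (e_{a,i,r}), for a ∈ A and i ∈ Y'∩I_{≤[r]}, is a Banach basis of C^r(𝒪_F,J',(d_σ)_{σ∈S∖J'}): the map c₀(A×(Y'∩I_{≤[r]})) → C^r(𝒪_F,J',(d_σ)_{σ∈S∖J'}) sending (b_{a,i}) to Σ_{a∈A} Σ_{i∈Y'∩I_{≤[r]}} b_{a,i}·e_{a,i,r} is an isomorphism of Banach spaces. -/

import Mathlib

/-!
Setting (cf. the paper's notations): `O` plays the role of the ring of integers `𝒪_F` of a
finite extension `F` of `ℚ_p`, `E` is the coefficient field (a finite extension of `ℚ_p`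
with its p-adic absolute value, normalized by `|x| = p^{-val_F(x)}`, `val_F(p) = [F:ℚ_p]`),
`S` is the (finite) set of `ℚ_p`-algebra embeddings `F ↪ E`, restricted here to `O`,
`ν : O → ℝ` is the absolute value on `O` (the common restriction of the norm of `E` along any
embedding), `ϖ` is a fixed uniformizer with `ν ϖ = q⁻¹` where `q = p^f` is the cardinality
of the residue field, and `u * ϖ ^ e = p` records the ramification index `e`.
-/

open scoped Classical

noncomputable section

namespace CrPaper

structure Setting (S O E : Type*) [Fintype S] [CommRing O] [NormedField E] where
  q : ℝ
  p : ℕ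
  fdeg : ℕ
  hp : p.Prime
  hfdeg : 0 < fdeg
  hq : q = (p : ℝ) ^ fdeg
  emb : S → O →+* E
  emb_inj : ∀ s, Function.Injective (emb s)
  emb_distinct : Function.Injective emb
  ν : O → ℝ
  norm_emb : ∀ (s) (z : O), ‖emb s z‖ = ν z
  norm_le_one : ∀ (s) (z : O), ‖emb s z‖ ≤ 1
  norm_add_max : ∀ x y : E, ‖x + y‖ ≤ max ‖x‖ ‖y‖
  ϖ : O
  ν_ϖ : ν ϖ = q⁻¹
  mem_ball_iff : ∀ (y : O) (n : ℕ), (∃ z, y = ϖ ^ n * z) ↔ ν y ≤ q⁻¹ ^ n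
  ram : ∃ (e : ℕ) (u : O), 0 < e ∧ IsUnit u ∧ u * ϖ ^ e = (p : O)

variable {S O E : Type*} [Fintype S] [DecidableEq S] [CommRing O] [IsDomain O]
  [NormedField E] [CompleteSpace E] [CharZero E]

/-- The total weight `|i| = ∑ i_σ` of a multi-index. -/
def wt (i : S → ℕ) : ℕ := ∑ s, i s

/-- `i! = ∏ i_σ!` for a multi-index. -/
def mfact (i : S → ℕ) : ℕ := ∏ s, (i s).factorial

/-- The (finite) set `I_{≤N}` of multi-indices of total weight `≤ N`. -/
def Idx (S : Type*) [Fintype S] [DecidableEq S] (N : ℕ) : Finset (S → ℕ) :=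
  (Fintype.piFinset fun _ : S => Finset.range (N + 1)).filter fun i => wt i ≤ N

/-- `z^i = ∏_σ σ(z)^{i_σ}`. -/
def mpow (St : Setting S O E) (z : O) (i : S → ℕ) : E := ∏ s, St.emb s z ^ i s

/-- The Taylor remainder `ε_{f,N}(x,y) = f(x+y) − ∑_{|i|≤N} D_i f(x) y^i / i!`. -/
def epsTay (St : Setting S O E) (N : ℕ) (f : O → E) (D : (S → ℕ) → O → E) (x y : O) : E :=
  f (x + y) - ∑ i ∈ Idx S N, D i x * mpow St y i / (mfact i : E)

/-- `f` is of class `C^r` with the family of bounded functions `D` witnessing the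
definition: all `D_i` (`|i| ≤ ⌊r⌋`) are bounded and
`C_{f,r}(h) = sup_{x ∈ O, y ∈ ϖ^h O} |ε_{f,⌊r⌋}(x,y)| q^{rh} → 0` as `h → ∞`. -/
def IsCrWith (St : Setting S O E) (r : ℝ) (f : O → E) (D : (S → ℕ) → O → E) : Prop :=
  (∀ i ∈ Idx S ⌊r⌋₊, ∃ C : ℝ, ∀ x : O, ‖D i x‖ ≤ C) ∧
  ∀ ε : ℝ, 0 < ε → ∃ M : ℕ, ∀ h : ℕ, M ≤ h → ∀ x z : O,
    ‖epsTay St ⌊r⌋₊ f D x (St.ϖ ^ h * z)‖ * St.q ^ (r * (h : ℝ)) ≤ ε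

/-- `f` is of class `C^r`. -/
def IsCr (St : Setting S O E) (r : ℝ) (f : O → E) : Prop :=
  ∃ D, IsCrWith St r f D

/-- The `C^r`-norm of `f` (relative to the — unique — family `D`):
`max( sup_{i,x} |D_i f(x)/i!| , sup_{x,y} |ε_{f,⌊r⌋}(x,y)|/|y|^r )`. -/
def CrNorm (St : Setting S O E) (r : ℝ) (f : O → E) (D : (S → ℕ) → O → E) : ℝ :=
  max (⨆ i : (Idx S ⌊r⌋₊), ⨆ x : O, ‖D i.1 x / (mfact i.1 : E)‖)
      (⨆ x : O, ⨆ y : O, ‖epsTay St ⌊r⌋₊ f D x y‖ / St.ν y ^ r)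

/-- A compatible system of representatives `A_h` of `O/ϖ^h O` with `A_0 = {0}` and
`A_h ⊆ A_{h+1}`. -/
structure RepSystem (St : Setting S O E) where
  A : ℕ → Finset O
  hA0 : A 0 = {0}
  hmono : ∀ h : ℕ, A h ⊆ A (h + 1)
  hrep : ∀ (h : ℕ) (z : O), ∃! a : O, a ∈ A h ∧ ∃ y : O, z = a + St.ϖ ^ h * y

/-- `A = ⋃_h A_h`. -/
def Aall (St : Setting S O E) (R : RepSystem St) : Set O := ⋃ h : ℕ, (R.A h : Set O)

/-- `l(a)`: the smallest `n` with `a ∈ A_n`. -/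
def lA (St : Setting S O E) (R : RepSystem St) (a : O) : ℕ := sInf {n : ℕ | a ∈ R.A n}

/-- The function `z ↦ 1_{a+ϖ^n O}(z) ((z−a)/ϖ^n)^i` : it takes the value `y^i` at
`z = a + ϖ^n y` and `0` outside the coset `a + ϖ^n O`. -/
def coeval (St : Setting S O E) (a : O) (n : ℕ) (i : S → ℕ) : O → E := fun z =>
  if hz : ∃ y : O, z = a + St.ϖ ^ n * y then mpow St hz.choose i else 0

/-- The function `e_{a,i,r}(z) = ρ(ϖ)^{[l(a)r]} 1_{a+ϖ^{l(a)}O}(z) ((z−a)/ϖ^{l(a)})^i`. -/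
def ebasis (St : Setting S O E) (R : RepSystem St) (ρ : O →+* E) (r : ℝ) (a : O)
    (i : S → ℕ) : O → E := fun z =>
  ρ St.ϖ ^ ⌊(lA St R a : ℝ) * r⌋₊ * coeval St a (lA St R a) i z

/-- `J' = J ∪ {σ ∈ S∖J : d_σ + 1 > r}`. -/
def Jp (J : Set S) (d : S → ℕ) (r : ℝ) : Set S := J ∪ {s | r < (d s : ℝ) + 1}

/-- The `c₀` condition: `b` vanishes at infinity. -/
def c0Fun {ι : Type*} (b : ι → E) : Prop := ∀ ε : ℝ, 0 < ε → {x : ι | ε ≤ ‖b x‖}.Finite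

set_option linter.unusedSectionVars false

/-! ### Basic facts -/

theorem one_lt_q (St : Setting S O E) : 1 < St.q := by
  rw [St.hq]
  exact one_lt_pow₀ (by exact_mod_cast St.hp.one_lt) St.hfdeg.ne'

theorem q_pos (St : Setting S O E) : 0 < St.q := lt_trans one_pos (one_lt_q St)

theorem isUltra (St : Setting S O E) : IsUltrametricDist E :=
  IsUltrametricDist.isUltrametricDist_of_forall_norm_add_le_max_norm St.norm_add_max

theorem mem_Idx {N : ℕ} {i : S → ℕ} : i ∈ Idx S N ↔ wt i ≤ N := by
  unfold Idx
  simp only [Finset.mem_filter, Fintype.mem_piFinset, Finset.mem_range, and_iff_right_iff_imp]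
  intro h s
  have : i s ≤ wt i := Finset.single_le_sum (f := i) (fun _ _ => Nat.zero_le _) (Finset.mem_univ s)
  omega

theorem mpow_mul (St : Setting S O E) (x y : O) (i : S → ℕ) :
    mpow St (x * y) i = mpow St x i * mpow St y i := by
  simp [mpow, mul_pow, Finset.prod_mul_distrib]

theorem mpow_one (St : Setting S O E) (i : S → ℕ) : mpow St 1 i = 1 := by
  simp [mpow]

theorem mpow_norm_le (St : Setting S O E) (x : O) (i : S → ℕ) : ‖mpow St x i‖ ≤ 1 := by
  unfold mpow
  rw [norm_prod]
  refine Finset.prod_le_one (fun _ _ => norm_nonneg _) (fun s _ => ?_)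
  rw [norm_pow]
  exact pow_le_one₀ (norm_nonneg _) (St.norm_le_one s x)

theorem mpow_norm (St : Setting S O E) (x : O) (i : S → ℕ) :
    ‖mpow St x i‖ = St.ν x ^ wt i := by
  unfold mpow wt
  rw [norm_prod, ← Finset.prod_pow_eq_pow_sum]
  refine Finset.prod_congr rfl (fun s _ => ?_)
  rw [norm_pow, St.norm_emb]

theorem mpow_pi_norm (St : Setting S O E) (n : ℕ) (i : S → ℕ) :
    ‖mpow St (St.ϖ ^ n) i‖ = (St.q⁻¹ ^ n) ^ wt i := by
  unfold mpow wt
  rw [norm_prod, ← Finset.prod_pow_eq_pow_sum]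
  refine Finset.prod_congr rfl (fun s _ => ?_)
  rw [norm_pow, map_pow, norm_pow, St.norm_emb, St.ν_ϖ]

theorem mpow_pi_ne (St : Setting S O E) (n : ℕ) (i : S → ℕ) :
    mpow St (St.ϖ ^ n) i ≠ 0 := by
  rw [← norm_pos_iff, mpow_pi_norm]
  have := q_pos St
  positivity

/-- The monomial as a character. -/
def mpowHom (St : Setting S O E) (i : S → ℕ) : O →* E where
  toFun z := mpow St z i
  map_one' := mpow_one St i
  map_mul' x y := mpow_mul St x y i

theorem deriv_aux (a : S → E) (i : S → ℕ) (t : Finset S) :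
    (∏ s ∈ t, (1 + Polynomial.C (a s) * Polynomial.X) ^ i s : Polynomial E).derivative.eval 0
      = ∑ s ∈ t, (i s : E) * a s := by
  induction t using Finset.induction_on with
  | empty => simp
  | insert s t hs ih =>
    rw [Finset.prod_insert hs, Finset.sum_insert hs, Polynomial.derivative_mul,
      Polynomial.eval_add, Polynomial.eval_mul, Polynomial.eval_mul, ih]
    simp [Polynomial.eval_prod, Polynomial.derivative_pow]

theorem mpow_distinct (St : Setting S O E) (i j : S → ℕ)
    (h : ∀ z, mpow St z i = mpow St z j) : i = j := by
  have key : ∀ w : O, ∑ s, (i s : E) * St.emb s w = ∑ s, (j s : E) * St.emb s w := by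
    intro w
    rw [← deriv_aux (fun s => St.emb s w) i, ← deriv_aux (fun s => St.emb s w) j]
    congr 2
    apply Polynomial.eq_of_infinite_eval_eq
    refine Set.Infinite.mono ?_ (Set.infinite_range_of_injective (Nat.cast_injective (R := E)))
    rintro _ ⟨n, rfl⟩
    have := h (1 + w * n)
    simpa [mpow, Polynomial.eval_prod] using this
  have li : LinearIndependent E (fun s : S => ((St.emb s).toMonoidHom : O → E)) :=
    (linearIndependent_monoidHom O E).comp (fun s : S => (St.emb s).toMonoidHom) (by
      intro s t hst
      apply St.emb_distinct
      ext z
      exact DFunLike.congr_fun hst z)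
  rw [Fintype.linearIndependent_iff] at li
  have := li (fun s => (i s : E) - j s) (by
    funext w
    simp only [Finset.sum_apply, Pi.smul_apply, smul_eq_mul, sub_mul, Finset.sum_sub_distrib]
    have := key w
    simpa [sub_eq_zero] using this)
  funext s
  have h2 := this s
  rw [sub_eq_zero] at h2
  exact_mod_cast h2

theorem mpow_indep (St : Setting S O E) (N : ℕ) (P : Idx S N → E)
    (h : ∀ z, ∑ i : Idx S N, P i * mpow St z i.1 = 0) : ∀ i, P i = 0 := by
  have li : LinearIndependent E (fun i : Idx S N => (mpowHom St i.1 : O → E)) :=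
    (linearIndependent_monoidHom O E).comp (fun i : Idx S N => mpowHom St i.1) (by
      intro s t hst
      apply Subtype.ext
      apply mpow_distinct St
      intro z
      exact DFunLike.congr_fun hst z)
  rw [Fintype.linearIndependent_iff] at li
  apply li
  funext z
  simpa [mpowHom] using h z

theorem span_ev (St : Setting S O E) (N : ℕ) :
    Submodule.span E (Set.range (fun z : O => fun i : Idx S N => mpow St z i.1)) = ⊤ := by
  by_contra hne
  obtain ⟨f, hf, hle⟩ := Submodule.exists_le_ker_of_lt_top _ (lt_top_iff_ne_top.mpr hne)
  have hz := mpow_indep St N (fun i => f (Pi.single i 1)) (by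
    intro z
    have h1 : f (fun i : Idx S N => mpow St z i.1) = 0 :=
      hle (Submodule.subset_span ⟨z, rfl⟩)
    rw [LinearMap.pi_apply_eq_sum_univ] at h1
    rw [← h1]
    refine Finset.sum_congr rfl (fun i _ => ?_)
    rw [smul_eq_mul, mul_comm]
    congr 2
    funext k
    simp [Pi.single_apply, eq_comm])
  apply hf
  apply LinearMap.pi_ext'
  intro i
  ext
  simpa using hz i

theorem coef_bound (St : Setting S O E) (N : ℕ) : ∃ c : ℝ, 0 ≤ c ∧
    ∀ (P : (S → ℕ) → E) (B : ℝ), (∀ z, ‖∑ i ∈ Idx S N, P i * mpow St z i‖ ≤ B) →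
      ∀ i ∈ Idx S N, ‖P i‖ ≤ c * B := by
  have h : ∀ i : Idx S N, ∃ l : O →₀ E,
      (l.sum fun z a => a • (fun i : Idx S N => mpow St z i.1)) = Pi.single i 1 := by
    intro i
    have : (Pi.single i 1 : Idx S N → E) ∈
      Submodule.span E (Set.range (fun z : O => fun i : Idx S N => mpow St z i.1)) := by
      rw [span_ev]; trivial
    exact Finsupp.mem_span_range_iff_exists_finsupp.mp this
  choose l hl using h
  refine ⟨∑ i, ∑ z ∈ (l i).support, ‖l i z‖, by positivity, ?_⟩
  intro P B hB i hi
  have hB0 : 0 ≤ B := (norm_nonneg _).trans (hB 0)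
  have e : P i = ∑ z ∈ (l ⟨i, hi⟩).support, l ⟨i, hi⟩ z *
      ∑ k ∈ Idx S N, P k * mpow St z k := by
    have h1 : ∀ k : Idx S N, (∑ z ∈ (l ⟨i, hi⟩).support, l ⟨i, hi⟩ z * mpow St z k.1)
        = if k = ⟨i, hi⟩ then 1 else 0 := by
      intro k
      have := congrFun (hl ⟨i, hi⟩) k
      simpa [Finsupp.sum, Pi.single_apply] using this
    simp_rw [Finset.mul_sum]
    rw [Finset.sum_comm, ← Finset.sum_coe_sort]
    have : ∀ k : Idx S N, ∑ z ∈ (l ⟨i, hi⟩).support, l ⟨i, hi⟩ z * (P k.1 * mpow St z k.1)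
        = P k.1 * if k = ⟨i, hi⟩ then 1 else 0 := by
      intro k
      rw [← h1, Finset.mul_sum]
      exact Finset.sum_congr rfl (fun _ _ => by ring)
    simp [this]
  calc ‖P i‖ ≤ ∑ z ∈ (l ⟨i, hi⟩).support, ‖l ⟨i, hi⟩ z‖ * B := by
        rw [e]
        refine (norm_sum_le _ _).trans (Finset.sum_le_sum fun z _ => ?_)
        rw [norm_mul]
        exact mul_le_mul_of_nonneg_left (hB z) (norm_nonneg _)
    _ = (∑ z ∈ (l ⟨i, hi⟩).support, ‖l ⟨i, hi⟩ z‖) * B := by rw [Finset.sum_mul]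
    _ ≤ _ := by
        refine mul_le_mul_of_nonneg_right ?_ hB0
        exact Finset.single_le_sum (f := fun i => ∑ z ∈ (l i).support, ‖l i z‖)
          (fun _ _ => by positivity) (Finset.mem_univ _)

theorem coef_bound_h (St : Setting S O E) (N : ℕ) : ∃ c : ℝ, 0 ≤ c ∧
    ∀ (h : ℕ) (P : (S → ℕ) → E) (B : ℝ),
      (∀ z, ‖∑ i ∈ Idx S N, P i * mpow St (St.ϖ ^ h * z) i‖ ≤ B) →
      ∀ i ∈ Idx S N, ‖P i‖ ≤ c * B * St.q ^ (h * wt i) := by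
  obtain ⟨c, hc, H⟩ := coef_bound St N
  refine ⟨c, hc, fun h P B hB i hi => ?_⟩
  have := H (fun i => P i * mpow St (St.ϖ ^ h) i) B (by
    intro z
    have := hB z
    simp_rw [mpow_mul, ← mul_assoc] at this
    exact this) i hi
  rw [norm_mul, mpow_pi_norm, ← pow_mul, inv_pow] at this
  have hq := q_pos St
  rwa [← div_eq_mul_inv, div_le_iff₀ (by positivity)] at this

/-! ### Multi-binomials -/

/-- Product of binomial coefficients. -/
def mchoose (i j : S → ℕ) : ℕ := ∏ s, (i s).choose (j s)

theorem wt_mono {i j : S → ℕ} (h : i ≤ j) : wt i ≤ wt j := Finset.sum_le_sum fun s _ => h s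

theorem wt_add (i j : S → ℕ) : wt (i + j) = wt i + wt j := Finset.sum_add_distrib

theorem mchoose_eq_zero {i j : S → ℕ} (h : ¬ j ≤ i) : mchoose i j = 0 := by
  rw [Pi.le_def, not_forall] at h
  obtain ⟨s, hs⟩ := h
  exact Finset.prod_eq_zero (Finset.mem_univ s) (Nat.choose_eq_zero_of_lt (not_le.mp hs))

theorem mchoose_ne_zero {i j : S → ℕ} (h : j ≤ i) : mchoose i j ≠ 0 :=
  Finset.prod_ne_zero_iff.mpr fun s _ => (Nat.choose_pos (h s)).ne'

theorem mchoose_self (i : S → ℕ) : mchoose i i = 1 := by simp [mchoose]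

theorem mpow_add (St : Setting S O E) {N : ℕ} (y z : O) {i : S → ℕ} (hi : i ∈ Idx S N) :
    mpow St (y + z) i = ∑ j ∈ Idx S N, (mchoose i j : E) * mpow St y (i - j) * mpow St z j := by
  have hle : ∀ s, i s ≤ N := fun s =>
    (Finset.single_le_sum (f := i) (fun _ _ => Nat.zero_le _) (Finset.mem_univ s)).trans
      (mem_Idx.mp hi)
  have h1 : ∀ s, St.emb s (y + z) ^ i s = ∑ m ∈ Finset.range (N + 1),
      ((i s).choose m : E) * St.emb s y ^ (i s - m) * St.emb s z ^ m := by
    intro s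
    rw [map_add, add_comm, add_pow]
    have := hle s
    have hsub : Finset.range (i s + 1) ⊆ Finset.range (N + 1) := by
      intro m hm
      simp only [Finset.mem_range] at hm ⊢
      omega
    rw [← Finset.sum_subset hsub]
    · exact Finset.sum_congr rfl fun _ _ => by ring
    · intro m _ hm
      have hm2 : i s < m := by
        rw [Finset.mem_range] at hm
        omega
      rw [Nat.choose_eq_zero_of_lt hm2]
      simp
  unfold mpow
  rw [Finset.prod_congr rfl (fun s _ => h1 s), Finset.prod_univ_sum, Idx,
    Finset.sum_filter_of_ne]
  · refine Finset.sum_congr rfl fun j _ => ?_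
    simp [mchoose, Finset.prod_mul_distrib]
  · intro j _ hne
    by_contra hw
    apply hne
    rw [mchoose_eq_zero]
    · simp
    · intro hji
      exact hw ((wt_mono hji).trans (mem_Idx.mp hi))

theorem wt_single (s : S) (n : ℕ) : wt (Pi.single s n : S → ℕ) = n := by
  simp [wt]

/-! ### Taylor expansions of the derivatives -/

theorem mfact_ne (i : S → ℕ) : (mfact i : E) ≠ 0 := by
  have : mfact i ≠ 0 := Finset.prod_ne_zero_iff.mpr fun s _ => Nat.factorial_ne_zero _
  exact_mod_cast this

theorem epsTay_eq (St : Setting S O E) (N : ℕ) (f : O → E) (D : (S → ℕ) → O → E) (x y : O) :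
    epsTay St N f D x y = f (x + y) - ∑ i ∈ Idx S N, D i x / (mfact i : E) * mpow St y i := by
  unfold epsTay
  congr 1
  exact Finset.sum_congr rfl fun i _ => by ring

/-- The Taylor remainder of the `j`-th normalised derivative. -/
def RR (St : Setting S O E) (N : ℕ) (D : (S → ℕ) → O → E) (j : S → ℕ) (x y : O) : E :=
  D j (x + y) / (mfact j : E) -
    ∑ i ∈ Idx S N, (mchoose i j : E) * (D i x / (mfact i : E)) * mpow St y (i - j)

theorem taylor_reexpand (St : Setting S O E) (N : ℕ) (D : (S → ℕ) → O → E) (x y z : O) :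
    ∑ i ∈ Idx S N, D i x / (mfact i : E) * mpow St (y + z) i =
      ∑ j ∈ Idx S N, (∑ i ∈ Idx S N,
        (mchoose i j : E) * (D i x / (mfact i : E)) * mpow St y (i - j)) * mpow St z j := by
  simp_rw [Finset.sum_mul]
  rw [Finset.sum_comm]
  refine Finset.sum_congr rfl fun i hi => ?_
  rw [mpow_add St y z hi, Finset.mul_sum]
  exact Finset.sum_congr rfl fun _ _ => by ring

theorem sum_RR (St : Setting S O E) (N : ℕ) (f : O → E) (D : (S → ℕ) → O → E) (x y z : O) :
    ∑ j ∈ Idx S N, RR St N D j x y * mpow St z j =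
      epsTay St N f D x (y + z) - epsTay St N f D (x + y) z := by
  rw [epsTay_eq, epsTay_eq, taylor_reexpand]
  simp_rw [RR, sub_mul, Finset.sum_sub_distrib]
  rw [add_assoc]
  ring

theorem norm_sub_le_of (St : Setting S O E) {a b : E} {B : ℝ} (ha : ‖a‖ ≤ B) (hb : ‖b‖ ≤ B) :
    ‖a - b‖ ≤ B := by
  rw [sub_eq_add_neg]
  exact (St.norm_add_max _ _).trans (max_le ha (by rwa [norm_neg]))

theorem RR_bound (St : Setting S O E) (N : ℕ) : ∃ c : ℝ, 0 ≤ c ∧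
    ∀ (f : O → E) (D : (S → ℕ) → O → E) (h : ℕ) (B : ℝ),
      (∀ x z, ‖epsTay St N f D x (St.ϖ ^ h * z)‖ ≤ B) →
      ∀ x z, ∀ j ∈ Idx S N, ‖RR St N D j x (St.ϖ ^ h * z)‖ ≤ c * B * St.q ^ (h * wt j) := by
  obtain ⟨c, hc, H⟩ := coef_bound_h St N
  refine ⟨c, hc, fun f D h B hB x z j hj => ?_⟩
  refine H h (fun j => RR St N D j x (St.ϖ ^ h * z)) B (fun w => ?_) j hj
  rw [sum_RR St N f, ← mul_add]
  exact norm_sub_le_of St (hB _ _) (hB _ _)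

theorem coef_vanish (St : Setting S O E) (N w : ℕ) (r : ℝ) (P : (S → ℕ) → E)
    (H : ∀ ε : ℝ, 0 < ε → ∃ M : ℕ, ∀ h : ℕ, M ≤ h → ∀ z : O,
      ‖∑ k ∈ Idx S N, P k * mpow St (St.ϖ ^ h * z) k‖ * St.q ^ (r * (h : ℝ)) ≤
        ε * St.q ^ (h * w))
    (k : S → ℕ) (hk : k ∈ Idx S N) (hw : ((wt k + w : ℕ) : ℝ) ≤ r) : P k = 0 := by
  obtain ⟨c, hc, Hc⟩ := coef_bound_h St N
  have hq := q_pos St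
  have key : ∀ ε : ℝ, 0 < ε → ‖P k‖ ≤ c * ε := by
    intro ε hε
    obtain ⟨M, hM⟩ := H ε hε
    have h1 := Hc M P (ε * St.q ^ (M * w) * (St.q ^ (r * (M : ℝ)))⁻¹) (fun z => by
      have := hM M le_rfl z
      rw [← div_eq_mul_inv, le_div_iff₀ (by positivity)]
      exact this) k hk
    refine h1.trans ?_
    have h2 : St.q ^ (M * w) * St.q ^ (M * wt k) ≤ St.q ^ (r * (M : ℝ)) := by
      rw [← pow_add, ← Real.rpow_natCast]
      apply Real.rpow_le_rpow_of_exponent_le (one_lt_q St).le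
      have : ((M * w + M * wt k : ℕ) : ℝ) = ((wt k + w : ℕ) : ℝ) * M := by push_cast; ring
      rw [this]
      exact mul_le_mul_of_nonneg_right hw (Nat.cast_nonneg _)
    calc c * (ε * St.q ^ (M * w) * (St.q ^ (r * (M : ℝ)))⁻¹) * St.q ^ (M * wt k)
        = c * ε * ((St.q ^ (M * w) * St.q ^ (M * wt k)) / St.q ^ (r * (M : ℝ))) := by
          rw [div_eq_mul_inv]; ring
      _ ≤ c * ε * 1 := by
          refine mul_le_mul_of_nonneg_left ?_ (by positivity)
          rw [div_le_one (by positivity)]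
          exact h2
      _ = c * ε := mul_one _
  rw [← norm_le_zero_iff]
  refine le_of_forall_pos_le_add fun ε hε => ?_
  have := key (ε / (c + 1)) (by positivity)
  refine this.trans ?_
  rw [zero_add, ← mul_div_assoc, div_le_iff₀ (by positivity)]
  nlinarith

theorem D_vanish_of_zero (St : Setting S O E) (r : ℝ) (hr : 0 ≤ r) (D : (S → ℕ) → O → E)
    (h : IsCrWith St r (fun _ => 0) D) (i : S → ℕ) (hi : i ∈ Idx S ⌊r⌋₊) (x : O) :
    D i x = 0 := by
  have := coef_vanish St ⌊r⌋₊ 0 r (fun i => D i x / (mfact i : E)) (by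
    intro ε hε
    obtain ⟨M, hM⟩ := h.2 ε hε
    refine ⟨M, fun h hh z => ?_⟩
    have := hM h hh x z
    rw [epsTay_eq, zero_sub, norm_neg] at this
    simpa using this) i hi (by
      have := mem_Idx.mp hi
      rw [Nat.le_floor_iff hr] at this
      simpa using this)
  exact (div_eq_zero_iff.mp this).resolve_right (mfact_ne i)

theorem le_r_of_mem {r : ℝ} (hr : 0 ≤ r) {i : S → ℕ} (hi : i ∈ Idx S ⌊r⌋₊) : (wt i : ℝ) ≤ r :=
  (Nat.le_floor_iff hr).mp (mem_Idx.mp hi)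

theorem D_vanish (St : Setting S O E) (r : ℝ) (hr : 0 ≤ r) (f : O → E) (D : (S → ℕ) → O → E)
    (h : IsCrWith St r f D) (j : S → ℕ) (hj : j ∈ Idx S ⌊r⌋₊) (hD : D j = 0)
    (i : S → ℕ) (hi : i ∈ Idx S ⌊r⌋₊) (hji : j ≤ i) (x : O) : D i x = 0 := by
  obtain ⟨c, hc, Hc⟩ := RR_bound St ⌊r⌋₊
  have hq := q_pos St
  have hre : ∀ y, ∑ i ∈ Idx S ⌊r⌋₊, (mchoose i j : E) * (D i x / (mfact i : E)) *
        mpow St y (i - j) = ∑ k ∈ Idx S ⌊r⌋₊, (if k + j ∈ Idx S ⌊r⌋₊ then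
          (mchoose (k + j) j : E) * (D (k + j) x / (mfact (k + j) : E)) else 0) *
        mpow St y k := by
    intro y
    have e1 : ∑ i ∈ Idx S ⌊r⌋₊, (mchoose i j : E) * (D i x / (mfact i : E)) *
        mpow St y (i - j) = ∑ i ∈ (Idx S ⌊r⌋₊).filter (fun i => j ≤ i),
        (mchoose i j : E) * (D i x / (mfact i : E)) * mpow St y (i - j) := by
      symm
      apply Finset.sum_filter_of_ne
      intro i _ hne
      by_contra hn
      apply hne
      rw [mchoose_eq_zero hn]
      simp
    have e2 : ∑ k ∈ Idx S ⌊r⌋₊, (if k + j ∈ Idx S ⌊r⌋₊ then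
          (mchoose (k + j) j : E) * (D (k + j) x / (mfact (k + j) : E)) else 0) *
        mpow St y k = ∑ k ∈ (Idx S ⌊r⌋₊).filter (fun k => k + j ∈ Idx S ⌊r⌋₊),
          (mchoose (k + j) j : E) * (D (k + j) x / (mfact (k + j) : E)) * mpow St y k := by
      rw [Finset.sum_filter]
      refine Finset.sum_congr rfl fun k _ => ?_
      split_ifs <;> simp
    rw [e1, e2]
    refine Finset.sum_bij' (fun i _ => i - j) (fun k _ => k + j) ?_ ?_ ?_ ?_ ?_
    · intro i hi
      rw [Finset.mem_filter] at hi ⊢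
      rw [tsub_add_cancel_of_le hi.2]
      refine ⟨?_, hi.1⟩
      have : i - j ≤ i := tsub_le_self
      exact mem_Idx.mpr ((wt_mono this).trans (mem_Idx.mp hi.1))
    · intro k hk
      rw [Finset.mem_filter] at hk ⊢
      exact ⟨hk.2, le_add_self⟩
    · intro i hi
      rw [Finset.mem_filter] at hi
      exact tsub_add_cancel_of_le hi.2
    · intro k hk
      exact add_tsub_cancel_right k j
    · intro i hi
      rw [Finset.mem_filter] at hi
      simp only [tsub_add_cancel_of_le hi.2]
  have key := coef_vanish St ⌊r⌋₊ (wt j) r (fun k => if k + j ∈ Idx S ⌊r⌋₊ then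
          (mchoose (k + j) j : E) * (D (k + j) x / (mfact (k + j) : E)) else 0) (by
      intro ε hε
      obtain ⟨M, hM⟩ := h.2 (ε / (c + 1)) (by positivity)
      refine ⟨M, fun h hh z => ?_⟩
      have h1 := Hc f D h (ε / (c + 1) * (St.q ^ (r * (h : ℝ)))⁻¹) (fun x z => by
        have := hM h hh x z
        rw [← div_eq_mul_inv, le_div_iff₀ (by positivity)]
        exact this) x z j hj
      rw [RR, hD, Pi.zero_apply, zero_div, zero_sub, norm_neg, hre] at h1
      refine (mul_le_mul_of_nonneg_right h1 (by positivity)).trans ?_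
      have e : c * (ε / (c + 1) * (St.q ^ (r * (h : ℝ)))⁻¹) * St.q ^ (h * wt j) *
          St.q ^ (r * (h : ℝ)) = (c / (c + 1)) * (ε * St.q ^ (h * wt j)) := by
        have : St.q ^ (r * (h : ℝ)) ≠ 0 := by positivity
        field_simp
      rw [e]
      refine mul_le_of_le_one_left (by positivity) ?_
      rw [div_le_one (by positivity)]
      linarith) (i - j) (mem_Idx.mpr ((wt_mono tsub_le_self).trans (mem_Idx.mp hi))) (by
        rw [← wt_add, tsub_add_cancel_of_le hji]
        exact le_r_of_mem hr hi)
  simp only [tsub_add_cancel_of_le hji, if_pos hi] at key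
  have h3 : (mchoose i j : E) ≠ 0 := by exact_mod_cast mchoose_ne_zero hji
  exact (div_eq_zero_iff.mp ((mul_eq_zero.mp key).resolve_left h3)).resolve_right (mfact_ne i)

/-! ### The functions `e_{a,i,r}` and their derivatives -/

theorem pi_ne (St : Setting S O E) (ρ : O →+* E) (hρ : ∀ z : O, ‖ρ z‖ = St.ν z) : St.ϖ ≠ 0 := by
  intro h
  have h1 := hρ St.ϖ
  rw [St.ν_ϖ, h, map_zero, norm_zero] at h1
  have := q_pos St
  have h2 : 0 < St.q⁻¹ := by positivity
  linarith

theorem nu_nonneg (St : Setting S O E) (ρ : O →+* E) (hρ : ∀ z : O, ‖ρ z‖ = St.ν z) (y : O) :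
    0 ≤ St.ν y := by rw [← hρ]; exact norm_nonneg _

theorem coset_inj (St : Setting S O E) (hϖ : St.ϖ ≠ 0) {a : O} {n : ℕ} {y y' : O}
    (h : a + St.ϖ ^ n * y = a + St.ϖ ^ n * y') : y = y' :=
  mul_left_cancel₀ (pow_ne_zero n hϖ) (add_left_cancel h)

theorem coeval_apply (St : Setting S O E) (hϖ : St.ϖ ≠ 0) (a : O) (n : ℕ) (i : S → ℕ) (y : O) :
    coeval St a n i (a + St.ϖ ^ n * y) = mpow St y i := by
  have hz : ∃ y' : O, a + St.ϖ ^ n * y = a + St.ϖ ^ n * y' := ⟨y, rfl⟩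
  unfold coeval
  rw [dif_pos hz, ← coset_inj St hϖ hz.choose_spec]

theorem coeval_not (St : Setting S O E) (a : O) (n : ℕ) (i : S → ℕ) (z : O)
    (h : ¬ ∃ y : O, z = a + St.ϖ ^ n * y) : coeval St a n i z = 0 := by
  unfold coeval
  rw [dif_neg h]

theorem coeval_norm (St : Setting S O E) (a : O) (n : ℕ) (i : S → ℕ) (z : O) :
    ‖coeval St a n i z‖ ≤ 1 := by
  unfold coeval
  split_ifs
  · exact mpow_norm_le _ _ _
  · simp

/-- Normalised derivative of `coeval`. -/
def dcoeval (St : Setting S O E) (a : O) (n : ℕ) (i j : S → ℕ) : O → E := fun z =>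
  if hz : ∃ y : O, z = a + St.ϖ ^ n * y then
    (mchoose i j : E) * mpow St hz.choose (i - j) / mpow St (St.ϖ ^ n) j else 0

theorem dcoeval_apply (St : Setting S O E) (hϖ : St.ϖ ≠ 0) (a : O) (n : ℕ) (i j : S → ℕ)
    (y : O) : dcoeval St a n i j (a + St.ϖ ^ n * y) =
      (mchoose i j : E) * mpow St y (i - j) / mpow St (St.ϖ ^ n) j := by
  have hz : ∃ y' : O, a + St.ϖ ^ n * y = a + St.ϖ ^ n * y' := ⟨y, rfl⟩
  unfold dcoeval
  rw [dif_pos hz, ← coset_inj St hϖ hz.choose_spec]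

theorem dcoeval_not (St : Setting S O E) (a : O) (n : ℕ) (i j : S → ℕ) (z : O)
    (h : ¬ ∃ y : O, z = a + St.ϖ ^ n * y) : dcoeval St a n i j z = 0 := by
  unfold dcoeval
  rw [dif_neg h]

theorem natCast_norm (St : Setting S O E) (n : ℕ) : ‖(n : E)‖ ≤ 1 := by
  have := isUltra St
  exact IsUltrametricDist.norm_natCast_le_one E n

theorem dcoeval_norm (St : Setting S O E) (a : O) (n : ℕ) (i j : S → ℕ) (z : O) :
    ‖dcoeval St a n i j z‖ ≤ St.q ^ (n * wt j) := by
  have hq := q_pos St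
  unfold dcoeval
  split_ifs with hz
  · rw [norm_div, norm_mul, mpow_pi_norm, ← pow_mul, inv_pow, div_inv_eq_mul]
    refine mul_le_of_le_one_left (by positivity) ?_
    exact mul_le_one₀ (natCast_norm St _) (norm_nonneg _) (mpow_norm_le St _ _)
  · simp only [norm_zero]; positivity

theorem rho_pow_norm (St : Setting S O E) (ρ : O →+* E) (hρ : ∀ z : O, ‖ρ z‖ = St.ν z) (m : ℕ) :
    ‖ρ St.ϖ ^ m‖ = St.q ^ (-(m : ℝ)) := by
  rw [norm_pow, hρ, St.ν_ϖ, Real.rpow_neg (q_pos St).le, Real.rpow_natCast, inv_pow]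

theorem rho_floor_le (St : Setting S O E) (ρ : O →+* E) (hρ : ∀ z : O, ‖ρ z‖ = St.ν z)
    (t : ℝ) : ‖ρ St.ϖ ^ ⌊t⌋₊‖ ≤ St.q * St.q ^ (-t) := by
  have hq := q_pos St
  rw [rho_pow_norm St ρ hρ]
  have : St.q * St.q ^ (-t) = St.q ^ (1 + -t) := by
    rw [Real.rpow_add hq, Real.rpow_one]
  rw [this]
  apply Real.rpow_le_rpow_of_exponent_le (one_lt_q St).le
  have := Nat.lt_floor_add_one t
  linarith

theorem rho_floor_ge (St : Setting S O E) (ρ : O →+* E) (hρ : ∀ z : O, ‖ρ z‖ = St.ν z)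
    (t : ℝ) (ht : 0 ≤ t) : St.q ^ (-t) ≤ ‖ρ St.ϖ ^ ⌊t⌋₊‖ := by
  rw [rho_pow_norm St ρ hρ]
  apply Real.rpow_le_rpow_of_exponent_le (one_lt_q St).le
  have := Nat.floor_le ht
  linarith

/-- The derivatives of `e_{a,i,r}`. -/
def Deb (St : Setting S O E) (R : RepSystem St) (ρ : O →+* E) (r : ℝ) (a : O)
    (i j : S → ℕ) : O → E := fun z =>
  ρ St.ϖ ^ ⌊(lA St R a : ℝ) * r⌋₊ * dcoeval St a (lA St R a) i j z * (mfact j : E)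

theorem Deb_div (St : Setting S O E) (R : RepSystem St) (ρ : O →+* E) (r : ℝ) (a : O)
    (i j : S → ℕ) (z : O) : Deb St R ρ r a i j z / (mfact j : E) =
      ρ St.ϖ ^ ⌊(lA St R a : ℝ) * r⌋₊ * dcoeval St a (lA St R a) i j z := by
  unfold Deb
  rw [mul_div_cancel_right₀ _ (mfact_ne j)]

theorem Deb_div_norm (St : Setting S O E) (R : RepSystem St) (ρ : O →+* E)
    (hρ : ∀ z : O, ‖ρ z‖ = St.ν z) (r : ℝ) (hr : 0 ≤ r) (a : O)
    (i j : S → ℕ) (hj : j ∈ Idx S ⌊r⌋₊) (z : O) :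
    ‖Deb St R ρ r a i j z / (mfact j : E)‖ ≤ St.q := by
  have hq := q_pos St
  rw [Deb_div, norm_mul]
  refine (mul_le_mul (rho_floor_le St ρ hρ _) (dcoeval_norm St _ _ _ _ _) (norm_nonneg _)
    (by positivity)).trans ?_
  rw [mul_assoc]
  refine mul_le_of_le_one_right hq.le ?_
  rw [← Real.rpow_natCast, ← Real.rpow_add hq]
  apply Real.rpow_le_one_of_one_le_of_nonpos (one_lt_q St).le
  have := le_r_of_mem hr hj
  push_cast
  nlinarith [(Nat.cast_nonneg (lA St R a) : (0 : ℝ) ≤ _)]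

theorem Deb_norm (St : Setting S O E) (R : RepSystem St) (ρ : O →+* E)
    (hρ : ∀ z : O, ‖ρ z‖ = St.ν z) (r : ℝ) (hr : 0 ≤ r) (a : O)
    (i j : S → ℕ) (hj : j ∈ Idx S ⌊r⌋₊) (z : O) : ‖Deb St R ρ r a i j z‖ ≤ St.q := by
  have h := Deb_div_norm St R ρ hρ r hr a i j hj z
  have e : Deb St R ρ r a i j z = Deb St R ρ r a i j z / (mfact j : E) * (mfact j : E) :=
    (div_mul_cancel₀ _ (mfact_ne j)).symm
  rw [e, norm_mul]
  exact (mul_le_of_le_one_right (norm_nonneg _) (natCast_norm St _)).trans h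

theorem ebasis_norm (St : Setting S O E) (R : RepSystem St) (ρ : O →+* E)
    (hρ : ∀ z : O, ‖ρ z‖ = St.ν z) (r : ℝ) (a : O) (i : S → ℕ) (z : O) :
    ‖ebasis St R ρ r a i z‖ ≤ St.q * St.q ^ (-((lA St R a : ℝ) * r)) := by
  unfold ebasis
  rw [norm_mul]
  exact (mul_le_of_le_one_right (norm_nonneg _) (coeval_norm St _ _ _ _)).trans
    (rho_floor_le St ρ hρ _)

theorem ebasis_norm' (St : Setting S O E) (R : RepSystem St) (ρ : O →+* E)
    (hρ : ∀ z : O, ‖ρ z‖ = St.ν z) (r : ℝ) (hr : 0 ≤ r) (a : O) (i : S → ℕ) (z : O) :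
    ‖ebasis St R ρ r a i z‖ ≤ St.q := by
  refine (ebasis_norm St R ρ hρ r a i z).trans (mul_le_of_le_one_right (q_pos St).le ?_)
  apply Real.rpow_le_one_of_one_le_of_nonpos (one_lt_q St).le
  have : 0 ≤ (lA St R a : ℝ) * r := by positivity
  linarith

theorem eps_zero (St : Setting S O E) (R : RepSystem St) (ρ : O →+* E)
    (hρ : ∀ z : O, ‖ρ z‖ = St.ν z) (r : ℝ) (a : O) (N : ℕ)
    (i : S → ℕ) (hi : i ∈ Idx S N) (x w : O) :
    epsTay St N (ebasis St R ρ r a i) (Deb St R ρ r a i) x (St.ϖ ^ lA St R a * w) = 0 := by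
  have hϖ := pi_ne St ρ hρ
  rw [epsTay_eq]
  simp_rw [Deb_div]
  unfold ebasis
  by_cases hx : ∃ y, x = a + St.ϖ ^ lA St R a * y
  · obtain ⟨y, rfl⟩ := hx
    rw [add_assoc, ← mul_add, coeval_apply St hϖ, mpow_add St y w hi, Finset.mul_sum,
      ← Finset.sum_sub_distrib]
    refine Finset.sum_eq_zero fun j _ => ?_
    rw [dcoeval_apply St hϖ, mpow_mul]
    have := mpow_pi_ne St (lA St R a) j
    field_simp
    ring
  · rw [coeval_not St]
    · simp [dcoeval_not St _ _ _ _ x hx]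
    · rintro ⟨y, hy⟩
      exact hx ⟨y - w, by rw [mul_sub]; linear_combination hy⟩

theorem eps_bound (St : Setting S O E) (R : RepSystem St) (ρ : O →+* E)
    (hρ : ∀ z : O, ‖ρ z‖ = St.ν z) (r : ℝ) (hr : 0 ≤ r) (a : O)
    (i : S → ℕ) (hi : i ∈ Idx S ⌊r⌋₊) (x y : O) :
    ‖epsTay St ⌊r⌋₊ (ebasis St R ρ r a i) (Deb St R ρ r a i) x y‖ ≤ St.q * St.ν y ^ r := by
  have hq := q_pos St
  have := isUltra St
  have hν := nu_nonneg St ρ hρ y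
  set n := lA St R a with hn
  by_cases hy : St.ν y ≤ St.q⁻¹ ^ n
  · obtain ⟨w, rfl⟩ := (St.mem_ball_iff y n).mpr hy
    rw [eps_zero St R ρ hρ r a _ i hi x w, norm_zero]
    positivity
  · rw [not_le] at hy
    have hν0 : 0 < St.ν y := lt_trans (by positivity) hy
    have h1 : 1 ≤ St.q ^ n * St.ν y := by
      rw [inv_pow, inv_lt_iff_one_lt_mul₀ (by positivity)] at hy
      rw [mul_comm]
      exact hy.le
    have h2 : ∀ m : ℕ, (m : ℝ) ≤ r →
        St.q ^ (-((n : ℝ) * r)) * (St.q ^ n * St.ν y) ^ m ≤ St.ν y ^ r := by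
      intro m hm
      have h3 : (St.q ^ n * St.ν y) ^ m ≤ (St.q ^ n * St.ν y) ^ r := by
        rw [← Real.rpow_natCast]
        exact Real.rpow_le_rpow_of_exponent_le h1 hm
      have h4 : (St.q ^ n) ^ r = St.q ^ ((n : ℝ) * r) := by
        rw [← Real.rpow_natCast, ← Real.rpow_mul hq.le]
      rw [Real.mul_rpow (by positivity) hν, h4] at h3
      rw [Real.rpow_neg hq.le, ← div_eq_inv_mul, div_le_iff₀ (by positivity)]
      rw [mul_comm (St.ν y ^ r)]
      exact h3
    rw [epsTay_eq]
    apply norm_sub_le_of St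
    · refine (ebasis_norm St R ρ hρ r a i _).trans (mul_le_mul_of_nonneg_left ?_ hq.le)
      have := h2 0 (by simpa using hr)
      simpa using this
    · apply IsUltrametricDist.norm_sum_le_of_forall_le_of_nonneg (by positivity)
      intro j hj
      rw [Deb_div, norm_mul, norm_mul, mpow_norm]
      calc _ ≤ St.q * St.q ^ (-((n : ℝ) * r)) * St.q ^ (n * wt j) * St.ν y ^ wt j := by
            gcongr
            · exact rho_floor_le St ρ hρ _
            · exact dcoeval_norm St _ _ _ _ _
        _ = St.q * (St.q ^ (-((n : ℝ) * r)) * (St.q ^ n * St.ν y) ^ wt j) := by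
            rw [mul_pow, ← pow_mul]; ring
        _ ≤ _ := mul_le_mul_of_nonneg_left (h2 _ (le_r_of_mem hr hj)) hq.le

/-! ### Summation over `c₀` -/

theorem summable_c0 (St : Setting S O E) {ι : Type*} (b g : ι → E) (hb : c0Fun b) (K : ℝ)
    (hg : ∀ x, ‖g x‖ ≤ K) : Summable (fun x => b x * g x) := by
  have := isUltra St
  apply NonarchimedeanAddGroup.summable_of_tendsto_cofinite_zero
  rw [Metric.tendsto_nhds]
  intro ε hε
  have hK : 0 < |K| + 1 := by positivity
  rw [Filter.eventually_cofinite]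
  refine (hb (ε / (|K| + 1)) (by positivity)).subset fun x hx => ?_
  rw [Set.mem_ofPred_eq, not_lt, dist_zero_right, norm_mul] at hx
  rw [Set.mem_ofPred_eq, div_le_iff₀ hK]
  refine hx.trans (mul_le_mul_of_nonneg_left ?_ (norm_nonneg _))
  have := (hg x).trans (le_abs_self K)
  linarith

theorem c0_bdd {ι : Type*} (b : ι → E) (hb : c0Fun b) : BddAbove (Set.range fun x => ‖b x‖) := by
  have h1 := (hb 1 one_pos).image (fun x => ‖b x‖)
  obtain ⟨C, hC⟩ := h1.bddAbove
  refine ⟨max C 1, ?_⟩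
  rintro _ ⟨x, rfl⟩
  by_cases hx : 1 ≤ ‖b x‖
  · exact le_max_of_le_left (hC ⟨x, hx, rfl⟩)
  · exact le_max_of_le_right (not_le.mp hx).le

/-- The index set of the basis. -/
abbrev Ix (St : Setting S O E) (R : RepSystem St) (J : Set S) (d : S → ℕ) (r : ℝ) :=
  {x : O × (S → ℕ) // x.1 ∈ Aall St R ∧ x.2 ∈ Idx S ⌊r⌋₊ ∧ ∀ s ∉ Jp J d r, x.2 s ≤ d s}

/-- The derivatives of a `c₀`-sum. -/
def DD (St : Setting S O E) (R : RepSystem St) (ρ : O →+* E) (J : Set S) (d : S → ℕ) (r : ℝ)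
    (b : Ix St R J d r → E) (j : S → ℕ) (z : O) : E :=
  ∑' x, b x * Deb St R ρ r x.1.1 x.1.2 j z

theorem eps_sum (St : Setting S O E) (R : RepSystem St) (ρ : O →+* E)
    (hρ : ∀ z : O, ‖ρ z‖ = St.ν z) (J : Set S) (d : S → ℕ) (r : ℝ) (hr : 0 ≤ r)
    (b : Ix St R J d r → E) (hb : c0Fun b) (x y : O) :
    epsTay St ⌊r⌋₊ (fun z => ∑' k, b k * ebasis St R ρ r k.1.1 k.1.2 z) (DD St R ρ J d r b) x y =
      ∑' k, b k * epsTay St ⌊r⌋₊ (ebasis St R ρ r k.1.1 k.1.2) (Deb St R ρ r k.1.1 k.1.2) x y := by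
  have s1 : ∀ z, Summable fun k : Ix St R J d r => b k * ebasis St R ρ r k.1.1 k.1.2 z := fun z =>
    summable_c0 St b _ hb St.q fun k => ebasis_norm' St R ρ hρ r hr _ _ _
  have s2 : ∀ j ∈ Idx S ⌊r⌋₊, ∀ z, Summable fun k : Ix St R J d r =>
      b k * Deb St R ρ r k.1.1 k.1.2 j z := fun j hj z =>
    summable_c0 St b _ hb St.q fun k => Deb_norm St R ρ hρ r hr _ _ _ hj _
  have s3 : ∀ j ∈ Idx S ⌊r⌋₊, Summable fun k : Ix St R J d r =>
      b k * Deb St R ρ r k.1.1 k.1.2 j x * (mpow St y j / (mfact j : E)) := fun j hj =>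
    (s2 j hj x).mul_right _
  unfold epsTay
  simp_rw [mul_sub]
  rw [Summable.tsum_sub (s1 _)]
  · congr 1
    simp_rw [Finset.mul_sum]
    have e : ∀ (k : Ix St R J d r) (j : S → ℕ),
        b k * (Deb St R ρ r k.1.1 k.1.2 j x * mpow St y j / (mfact j : E)) =
        b k * Deb St R ρ r k.1.1 k.1.2 j x * (mpow St y j / (mfact j : E)) :=
      fun k j => by ring
    simp_rw [e]
    rw [Summable.tsum_finsetSum s3]
    refine Finset.sum_congr rfl fun j hj => ?_
    rw [tsum_mul_right, DD, mul_div_assoc]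
  · simp_rw [Finset.mul_sum]
    refine summable_sum fun j hj => ?_
    refine (s3 j hj).congr fun k => ?_
    ring

theorem part1 (St : Setting S O E) (R : RepSystem St) (ρ : O →+* E)
    (hρ : ∀ z : O, ‖ρ z‖ = St.ν z) (J : Set S) (d : S → ℕ) (r : ℝ) (hr : 0 ≤ r)
    (b : Ix St R J d r → E) (hb : c0Fun b) :
    IsCrWith St r (fun z => ∑' k, b k * ebasis St R ρ r k.1.1 k.1.2 z) (DD St R ρ J d r b) ∧
    (∀ s ∉ Jp J d r, DD St R ρ J d r b (Pi.single s (d s + 1)) = 0) ∧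
    CrNorm St r (fun z => ∑' k, b k * ebasis St R ρ r k.1.1 k.1.2 z) (DD St R ρ J d r b) ≤
      St.q * ⨆ x, ‖b x‖ := by
  have hq := q_pos St
  have := isUltra St
  have hϖ := pi_ne St ρ hρ
  have hbd := c0_bdd b hb
  have hsup : ∀ x, ‖b x‖ ≤ ⨆ x, ‖b x‖ := fun x => le_ciSup hbd x
  have hsup0 : 0 ≤ ⨆ x, ‖b x‖ := Real.iSup_nonneg fun x => norm_nonneg _
  refine ⟨⟨?_, ?_⟩, ?_, ?_⟩
  · intro j hj
    refine ⟨(⨆ x, ‖b x‖) * St.q, fun x => ?_⟩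
    apply IsUltrametricDist.norm_tsum_le_of_forall_le_of_nonneg (by positivity)
    intro k
    rw [norm_mul]
    exact mul_le_mul (hsup k) (Deb_norm St R ρ hρ r hr _ _ _ hj _) (norm_nonneg _) hsup0
  · intro ε hε
    have hfin := hb (ε / St.q) (by positivity)
    obtain ⟨M, hM⟩ := (hfin.image (fun k => lA St R k.1.1)).bddAbove
    refine ⟨M, fun h hh x z => ?_⟩
    have hν := nu_nonneg St ρ hρ (St.ϖ ^ h * z)
    have hνle : St.ν (St.ϖ ^ h * z) ≤ St.q⁻¹ ^ h := (St.mem_ball_iff _ h).mp ⟨z, rfl⟩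
    rw [eps_sum St R ρ hρ J d r hr b hb]
    have h1 : ‖∑' k, b k * epsTay St ⌊r⌋₊ (ebasis St R ρ r k.1.1 k.1.2)
        (Deb St R ρ r k.1.1 k.1.2) x (St.ϖ ^ h * z)‖ ≤ ε * St.ν (St.ϖ ^ h * z) ^ r := by
      apply IsUltrametricDist.norm_tsum_le_of_forall_le_of_nonneg (by positivity)
      intro k
      by_cases hk : ε / St.q ≤ ‖b k‖
      · have hl : lA St R k.1.1 ≤ h := (hM ⟨k, hk, rfl⟩).trans hh
        have e : St.ϖ ^ h * z = St.ϖ ^ lA St R k.1.1 * (St.ϖ ^ (h - lA St R k.1.1) * z) := by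
          rw [← mul_assoc, ← pow_add, Nat.add_sub_cancel' hl]
        have e0 := eps_zero St R ρ hρ r k.1.1 _ k.1.2 k.2.2.1 x (St.ϖ ^ (h - lA St R k.1.1) * z)
        rw [← e] at e0
        rw [e0, mul_zero, norm_zero]
        positivity
      · rw [norm_mul]
        calc _ ≤ (ε / St.q) * (St.q * St.ν (St.ϖ ^ h * z) ^ r) :=
              mul_le_mul (not_le.mp hk).le (eps_bound St R ρ hρ r hr _ _ k.2.2.1 _ _)
                (norm_nonneg _) (by positivity)
          _ = _ := by field_simp
    have h2 : St.ν (St.ϖ ^ h * z) ^ r * St.q ^ (r * (h : ℝ)) ≤ 1 := by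
      have h3 := Real.rpow_le_rpow hν hνle hr
      have h4 : (St.q⁻¹ ^ h) ^ r = (St.q ^ (r * (h : ℝ)))⁻¹ := by
        rw [inv_pow, Real.inv_rpow (by positivity), ← Real.rpow_natCast, ← Real.rpow_mul hq.le,
          mul_comm]
      rw [h4] at h3
      calc _ ≤ (St.q ^ (r * (h : ℝ)))⁻¹ * St.q ^ (r * (h : ℝ)) :=
            mul_le_mul_of_nonneg_right h3 (by positivity)
        _ = 1 := inv_mul_cancel₀ (by positivity)
    calc _ ≤ ε * St.ν (St.ϖ ^ h * z) ^ r * St.q ^ (r * (h : ℝ)) :=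
          mul_le_mul_of_nonneg_right h1 (by positivity)
      _ = ε * (St.ν (St.ϖ ^ h * z) ^ r * St.q ^ (r * (h : ℝ))) := by ring
      _ ≤ ε * 1 := mul_le_mul_of_nonneg_left h2 hε.le
      _ = ε := mul_one _
  · intro s hs
    funext z
    unfold DD
    have : ∀ k : Ix St R J d r,
        b k * Deb St R ρ r k.1.1 k.1.2 (Pi.single s (d s + 1)) z = 0 := by
      intro k
      have h0 : mchoose k.1.2 (Pi.single s (d s + 1)) = 0 := by
        apply mchoose_eq_zero
        intro hle
        have h1 : d s + 1 ≤ k.1.2 s := by simpa using hle s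
        have h2 := k.2.2.2 s hs
        omega
      have h1 : dcoeval St k.1.1 (lA St R k.1.1) k.1.2 (Pi.single s (d s + 1)) z = 0 := by
        unfold dcoeval
        rw [h0]
        simp
      unfold Deb
      rw [h1]
      simp
    simp only [this, tsum_zero, Pi.zero_apply]
  · unfold CrNorm
    have hnn : 0 ≤ St.q * ⨆ x, ‖b x‖ := by positivity
    apply max_le
    · refine Real.iSup_le (fun j => Real.iSup_le (fun x => ?_) hnn) hnn
      unfold DD
      rw [← tsum_div_const]
      apply IsUltrametricDist.norm_tsum_le_of_forall_le_of_nonneg hnn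
      intro k
      rw [mul_div_assoc, norm_mul, mul_comm]
      exact mul_le_mul (Deb_div_norm St R ρ hρ r hr _ _ _ j.2 _) (hsup k) (norm_nonneg _) hq.le
    · refine Real.iSup_le (fun x => Real.iSup_le (fun y => ?_) hnn) hnn
      have hν := nu_nonneg St ρ hρ y
      rw [eps_sum St R ρ hρ J d r hr b hb]
      apply div_le_of_le_mul₀ (by positivity) hnn
      apply IsUltrametricDist.norm_tsum_le_of_forall_le_of_nonneg (by positivity)
      intro k
      rw [norm_mul]
      calc _ ≤ (⨆ x, ‖b x‖) * (St.q * St.ν y ^ r) :=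
            mul_le_mul (hsup k) (eps_bound St R ρ hρ r hr _ _ k.2.2.1 _ _)
              (norm_nonneg _) hsup0
        _ = _ := by ring

/-! ### Representatives -/

theorem A_mono (St : Setting S O E) (R : RepSystem St) {m n : ℕ} (h : m ≤ n) : R.A m ⊆ R.A n :=
  monotone_nat_of_le_succ R.hmono h

theorem A_unique (St : Setting S O E) (R : RepSystem St) {n : ℕ} {a a' : O} (ha : a ∈ R.A n)
    (ha' : a' ∈ R.A n) (h : ∃ y, a = a' + St.ϖ ^ n * y) : a = a' :=
  (R.hrep n a).unique ⟨ha, 0, by simp⟩ ⟨ha', h⟩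

theorem mem_A_lA (St : Setting S O E) (R : RepSystem St) {a : O} (ha : a ∈ Aall St R) :
    a ∈ R.A (lA St R a) := by
  obtain ⟨n, hn⟩ := Set.mem_iUnion.mp ha
  exact Nat.sInf_mem (s := {n : ℕ | a ∈ R.A n}) ⟨n, hn⟩

theorem lA_le (St : Setting S O E) (R : RepSystem St) {a : O} {n : ℕ} (ha : a ∈ R.A n) :
    lA St R a ≤ n := Nat.sInf_le (s := {n : ℕ | a ∈ R.A n}) ha

theorem mem_Aall (St : Setting S O E) (R : RepSystem St) {a : O} {n : ℕ} (ha : a ∈ R.A n) :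
    a ∈ Aall St R := Set.mem_iUnion.mpr ⟨n, ha⟩

theorem mem_A_iff (St : Setting S O E) (R : RepSystem St) {a : O} (ha : a ∈ Aall St R) {n : ℕ} :
    a ∈ R.A n ↔ lA St R a ≤ n :=
  ⟨lA_le St R, fun h => A_mono St R h (mem_A_lA St R ha)⟩

theorem mpow_zero' (St : Setting S O E) {k : S → ℕ} (hk : k ≠ 0) : mpow St 0 k = 0 := by
  obtain ⟨s, hs⟩ := Function.ne_iff.mp hk
  refine Finset.prod_eq_zero (Finset.mem_univ s) ?_
  rw [map_zero, zero_pow hs]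

theorem mpow_exp_zero (St : Setting S O E) (z : O) : mpow St z 0 = 1 := by simp [mpow]

theorem inj_aux (St : Setting S O E) (R : RepSystem St) (ρ : O →+* E)
    (hρ : ∀ z : O, ‖ρ z‖ = St.ν z) (J : Set S) (d : S → ℕ) (r : ℝ) (hr : 0 ≤ r)
    (b : Ix St R J d r → E) (hb : c0Fun b)
    (h0 : ∀ z, ∑' k, b k * ebasis St R ρ r k.1.1 k.1.2 z = 0) :
    ∀ (n : ℕ) (x : Ix St R J d r), lA St R x.1.1 = n → b x = 0 := by
  have hϖ := pi_ne St ρ hρ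
  have hC := (part1 St R ρ hρ J d r hr b hb).1
  simp_rw [h0] at hC
  have hD := D_vanish_of_zero St r hr _ hC
  intro n
  induction n using Nat.strong_induction_on with
  | _ n ih =>
    intro x hx
    have h1 := hD x.1.2 x.2.2.1 x.1.1
    unfold DD at h1
    rw [tsum_eq_single x] at h1
    · rcases mul_eq_zero.mp h1 with h2 | h2
      · exact h2
      · exfalso
        have e := dcoeval_apply St hϖ x.1.1 (lA St R x.1.1) x.1.2 x.1.2 0
        rw [mul_zero, add_zero, mchoose_self, tsub_self, mpow_exp_zero] at e
        unfold Deb at h2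
        rw [e] at h2
        have hρ0 : ρ St.ϖ ≠ 0 := by
          rw [← norm_pos_iff, hρ, St.ν_ϖ]
          have := q_pos St
          positivity
        have := mpow_pi_ne St (lA St R x.1.1) x.1.2
        have := mfact_ne (E := E) x.1.2
        refine absurd h2 (mul_ne_zero (mul_ne_zero (pow_ne_zero _ hρ0) ?_) ‹_›)
        simp only [Nat.cast_one, one_mul]
        exact one_div_ne_zero ‹_›
    · intro k hk
      by_cases hc : ∃ y, x.1.1 = k.1.1 + St.ϖ ^ lA St R k.1.1 * y
      · by_cases hl : lA St R x.1.1 ≤ lA St R k.1.1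
        · have hmem := (mem_A_iff St R x.2.1).mpr hl
          have heq := A_unique St R hmem (mem_A_lA St R k.2.1) hc
          have hne : k.1.2 ≠ x.1.2 := fun h => hk (Subtype.ext (Prod.ext heq.symm h))
          have e := dcoeval_apply St hϖ k.1.1 (lA St R k.1.1) k.1.2 x.1.2 0
          have e0 : (mchoose k.1.2 x.1.2 : E) * mpow St 0 (k.1.2 - x.1.2) = 0 := by
            by_cases hle : x.1.2 ≤ k.1.2
            · rw [mpow_zero' St, mul_zero]
              intro hh
              exact hne (le_antisymm (tsub_eq_zero_iff_le.mp hh) hle)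
            · rw [mchoose_eq_zero hle]; simp
          rw [mul_zero, add_zero, e0, zero_div] at e
          unfold Deb
          rw [heq, e]
          simp
        · rw [ih (lA St R k.1.1) (by omega) k rfl, zero_mul]
      · unfold Deb
        rw [dcoeval_not St _ _ _ _ _ hc]
        simp

theorem part3 (St : Setting S O E) (R : RepSystem St) (ρ : O →+* E)
    (hρ : ∀ z : O, ‖ρ z‖ = St.ν z) (J : Set S) (d : S → ℕ) (r : ℝ) (hr : 0 ≤ r)
    (b₁ b₂ : Ix St R J d r → E) (hb₁ : c0Fun b₁) (hb₂ : c0Fun b₂)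
    (h : ∀ z, ∑' k, b₁ k * ebasis St R ρ r k.1.1 k.1.2 z =
      ∑' k, b₂ k * ebasis St R ρ r k.1.1 k.1.2 z) : b₁ = b₂ := by
  have s : ∀ b : Ix St R J d r → E, c0Fun b → ∀ z,
      Summable fun k : Ix St R J d r => b k * ebasis St R ρ r k.1.1 k.1.2 z := fun b hb z =>
    summable_c0 St b _ hb St.q fun k => ebasis_norm' St R ρ hρ r hr _ _ _
  have hc : c0Fun (fun k => b₁ k - b₂ k) := by
    intro ε hε
    refine ((hb₁ ε hε).union (hb₂ ε hε)).subset fun k hk => ?_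
    by_contra hn
    rw [Set.mem_union, not_or] at hn
    have h1 : ‖b₁ k‖ < ε := not_le.mp hn.1
    have h2 : ‖-b₂ k‖ < ε := by rw [norm_neg]; exact not_le.mp hn.2
    have h3 : ε ≤ ‖b₁ k - b₂ k‖ := hk
    rw [sub_eq_add_neg] at h3
    exact absurd (h3.trans (St.norm_add_max _ _)) (not_le.mpr (max_lt h1 h2))
  funext k
  have := inj_aux St R ρ hρ J d r hr _ hc (fun z => by
    simp_rw [sub_mul]
    rw [Summable.tsum_sub (s _ hb₁ z) (s _ hb₂ z), h, sub_self]) _ k rfl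
  exact sub_eq_zero.mp this

/-! ### Boundedness of the quantities in the norm -/

theorem eps_of_nu_zero (St : Setting S O E) (r : ℝ) (hr : 0 ≤ r) (f : O → E)
    (D : (S → ℕ) → O → E) (h : IsCrWith St r f D) (x y : O) (hy : St.ν y = 0) :
    epsTay St ⌊r⌋₊ f D x y = 0 := by
  have hq := q_pos St
  rw [← norm_le_zero_iff]
  refine le_of_forall_pos_le_add fun ε hε => ?_
  obtain ⟨M, hM⟩ := h.2 ε hε
  obtain ⟨z, hz⟩ := (St.mem_ball_iff y M).mpr (by rw [hy]; positivity)
  have h1 := hM M le_rfl x z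
  rw [← hz] at h1
  rw [zero_add]
  refine le_trans (le_mul_of_one_le_right (norm_nonneg _) ?_) h1
  exact Real.one_le_rpow (one_lt_q St).le (by positivity)

theorem sum_bdd (St : Setting S O E) (r : ℝ) (f : O → E)
    (D : (S → ℕ) → O → E) (h : IsCrWith St r f D) : ∃ C : ℝ, 0 ≤ C ∧
      (∀ i ∈ Idx S ⌊r⌋₊, ∀ x, ‖D i x / (mfact i : E)‖ ≤ C) ∧
      ∀ x y, ‖∑ i ∈ Idx S ⌊r⌋₊, D i x / (mfact i : E) * mpow St y i‖ ≤ C := by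
  have := isUltra St
  have h1 : ∀ i : Idx S ⌊r⌋₊, ∃ C : ℝ, ∀ x, ‖D i.1 x / (mfact i.1 : E)‖ ≤ C := by
    intro i
    obtain ⟨C, hC⟩ := h.1 i.1 i.2
    refine ⟨C / ‖(mfact i.1 : E)‖, fun x => ?_⟩
    rw [norm_div]
    exact div_le_div_of_nonneg_right (hC x) (norm_nonneg _)
  choose C hC using h1
  have hC0 : ∀ i, 0 ≤ C i := fun i => (norm_nonneg _).trans (hC i 0)
  have hle : ∀ i ∈ Idx S ⌊r⌋₊, ∀ x, ‖D i x / (mfact i : E)‖ ≤ ∑ i, C i := fun i hi x =>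
    (hC ⟨i, hi⟩ x).trans (Finset.single_le_sum (f := C) (fun i _ => hC0 i) (Finset.mem_univ _))
  have h0 : 0 ≤ ∑ i, C i := Finset.sum_nonneg fun i _ => hC0 i
  refine ⟨∑ i, C i, h0, hle, fun x y => ?_⟩
  apply IsUltrametricDist.norm_sum_le_of_forall_le_of_nonneg h0
  intro i hi
  rw [norm_mul]
  exact (mul_le_of_le_one_right (norm_nonneg _) (mpow_norm_le St _ _)).trans (hle i hi x)

theorem eps_bdd (St : Setting S O E) (r : ℝ) (f : O → E)
    (D : (S → ℕ) → O → E) (h : IsCrWith St r f D) : ∃ C : ℝ, 0 ≤ C ∧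
      ∀ x y, ‖epsTay St ⌊r⌋₊ f D x y‖ ≤ C := by
  have hq := q_pos St
  obtain ⟨C, hC0, _, hC⟩ := sum_bdd St r f D h
  obtain ⟨M, hM⟩ := h.2 1 one_pos
  have hf : ∀ x, ‖f x‖ ≤ (St.q ^ (r * (M : ℝ)))⁻¹ + C := by
    intro x
    have h1 := hM M le_rfl x 0
    rw [mul_zero] at h1
    have h2 : ‖epsTay St ⌊r⌋₊ f D x 0‖ ≤ (St.q ^ (r * (M : ℝ)))⁻¹ := by
      rw [← one_div, le_div_iff₀ (by positivity)]
      exact h1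
    have e : f x = epsTay St ⌊r⌋₊ f D x 0 +
        ∑ i ∈ Idx S ⌊r⌋₊, D i x / (mfact i : E) * mpow St 0 i := by
      rw [epsTay_eq, add_zero]; ring
    rw [e]
    exact (norm_add_le _ _).trans (add_le_add h2 (hC x 0))
  refine ⟨(St.q ^ (r * (M : ℝ)))⁻¹ + C + C, by positivity, fun x y => ?_⟩
  rw [epsTay_eq]
  exact (norm_sub_le _ _).trans (add_le_add (hf _) (hC x y))

theorem eps_div_bdd (St : Setting S O E) (ρ : O →+* E)
    (hρ : ∀ z : O, ‖ρ z‖ = St.ν z) (r : ℝ) (hr : 0 ≤ r) (f : O → E)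
    (D : (S → ℕ) → O → E) (h : IsCrWith St r f D) : ∃ C : ℝ, 0 ≤ C ∧
      ∀ x y, ‖epsTay St ⌊r⌋₊ f D x y‖ / St.ν y ^ r ≤ C := by
  have hq := q_pos St
  have hq1 := one_lt_q St
  obtain ⟨C, hC0, hC⟩ := eps_bdd St r f D h
  obtain ⟨M, hM⟩ := h.2 1 one_pos
  have hpow : ∀ n : ℕ, (St.q⁻¹ ^ n) ^ r = (St.q ^ (r * (n : ℝ)))⁻¹ := by
    intro n
    rw [inv_pow, Real.inv_rpow (by positivity), ← Real.rpow_natCast, ← Real.rpow_mul hq.le,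
      mul_comm]
  refine ⟨max (C * St.q ^ (r * (M : ℝ))) (St.q ^ r), by positivity, fun x y => ?_⟩
  have hν := nu_nonneg St ρ hρ y
  rcases hν.eq_or_lt with h0 | hpos
  · rw [eps_of_nu_zero St r hr f D h x y h0.symm, norm_zero, zero_div]
    positivity
  · by_cases hy : St.ν y ≤ St.q⁻¹ ^ M
    · apply le_max_of_le_right
      have hy1 : St.ν y ≤ 1 := (St.mem_ball_iff y 0).mp ⟨y, by simp⟩ |>.trans (by simp)
      obtain ⟨n, hn1, hn2⟩ := exists_nat_pow_near_of_lt_one hpos hy1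
        (show 0 < St.q⁻¹ by positivity) (inv_lt_one_of_one_lt₀ hq1)
      have hMn : M ≤ n := by
        by_contra hlt
        have : n + 1 ≤ M := by omega
        have h3 : St.q⁻¹ ^ M ≤ St.q⁻¹ ^ (n + 1) :=
          pow_le_pow_of_le_one (by positivity) (inv_le_one_of_one_le₀ hq1.le) this
        linarith
      obtain ⟨z, rfl⟩ := (St.mem_ball_iff y n).mpr hn2
      have h1 := hM n hMn x z
      have h2 : (St.q ^ (r * ((n + 1 : ℕ) : ℝ)))⁻¹ ≤ St.ν (St.ϖ ^ n * z) ^ r := by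
        rw [← hpow]
        exact Real.rpow_le_rpow (by positivity) hn1.le hr
      have h3 : St.q ^ (r * ((n + 1 : ℕ) : ℝ)) = St.q ^ (r * (n : ℝ)) * St.q ^ r := by
        rw [← Real.rpow_add hq]; push_cast; ring_nf
      have hA : 0 < St.q ^ (r * (n : ℝ)) := by positivity
      have hB : 0 < St.q ^ r := by positivity
      have hN : 0 < St.ν (St.ϖ ^ n * z) ^ r := Real.rpow_pos_of_pos hpos r
      rw [h3, inv_le_iff_one_le_mul₀ (by positivity)] at h2
      rw [div_le_iff₀ hN]
      have h4 : ‖epsTay St ⌊r⌋₊ f D x (St.ϖ ^ n * z)‖ * St.q ^ (r * (n : ℝ)) ≤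
          (St.q ^ r * St.ν (St.ϖ ^ n * z) ^ r) * St.q ^ (r * (n : ℝ)) := by
        refine h1.trans (h2.trans_eq ?_)
        ring
      exact le_of_mul_le_mul_right h4 hA
    · apply le_max_of_le_left
      have h2 : (St.q ^ (r * (M : ℝ)))⁻¹ ≤ St.ν y ^ r := by
        rw [← hpow]
        exact Real.rpow_le_rpow (by positivity) (not_le.mp hy).le hr
      have hN : 0 < St.ν y ^ r := Real.rpow_pos_of_pos hpos r
      rw [inv_le_iff_one_le_mul₀ (by positivity)] at h2
      rw [div_le_iff₀ hN]
      calc _ ≤ C * 1 := by rw [mul_one]; exact hC x y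
        _ ≤ C * (St.ν y ^ r * St.q ^ (r * (M : ℝ))) := mul_le_mul_of_nonneg_left h2 hC0
        _ = _ := by ring

theorem D_le_CrNorm (St : Setting S O E) (r : ℝ) (f : O → E)
    (D : (S → ℕ) → O → E) (h : IsCrWith St r f D) (i : S → ℕ) (hi : i ∈ Idx S ⌊r⌋₊) (x : O) :
    ‖D i x / (mfact i : E)‖ ≤ CrNorm St r f D := by
  obtain ⟨C, hC0, hC, _⟩ := sum_bdd St r f D h
  refine le_max_of_le_left ?_
  refine le_ciSup_of_le (Set.finite_range _).bddAbove ⟨i, hi⟩ ?_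
  refine le_ciSup (f := fun x => ‖D i x / (mfact i : E)‖) ⟨C, ?_⟩ x
  rintro _ ⟨x, rfl⟩
  exact hC i hi x

theorem eps_le_CrNorm (St : Setting S O E) (ρ : O →+* E)
    (hρ : ∀ z : O, ‖ρ z‖ = St.ν z) (r : ℝ) (hr : 0 ≤ r) (f : O → E)
    (D : (S → ℕ) → O → E) (h : IsCrWith St r f D) (n : ℕ) (x z : O) :
    ‖epsTay St ⌊r⌋₊ f D x (St.ϖ ^ n * z)‖ * St.q ^ (r * (n : ℝ)) ≤ CrNorm St r f D := by
  have hq := q_pos St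
  obtain ⟨C, hC0, hC⟩ := eps_div_bdd St ρ hρ r hr f D h
  have key : ∀ y, ‖epsTay St ⌊r⌋₊ f D x y‖ / St.ν y ^ r ≤ CrNorm St r f D := by
    intro y
    refine le_max_of_le_right ?_
    refine le_ciSup_of_le (f := fun x => ⨆ y, ‖epsTay St ⌊r⌋₊ f D x y‖ / St.ν y ^ r)
      ⟨C, ?_⟩ x ?_
    · rintro _ ⟨x, rfl⟩
      exact Real.iSup_le (hC x) hC0
    · refine le_ciSup (f := fun y => ‖epsTay St ⌊r⌋₊ f D x y‖ / St.ν y ^ r) ⟨C, ?_⟩ y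
      rintro _ ⟨y, rfl⟩
      exact hC x y
  set y := St.ϖ ^ n * z with hy
  have hν := nu_nonneg St ρ hρ y
  have hνle : St.ν y ≤ St.q⁻¹ ^ n := (St.mem_ball_iff _ n).mp ⟨z, rfl⟩
  have hN0 : 0 ≤ CrNorm St r f D := (key 0).trans' (by
    have := nu_nonneg St ρ hρ 0
    positivity)
  rcases hν.eq_or_lt with h0 | hpos
  · rw [eps_of_nu_zero St r hr f D h x y h0.symm, norm_zero, zero_mul]
    exact hN0
  · have h1 := key y
    rw [div_le_iff₀ (Real.rpow_pos_of_pos hpos r)] at h1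
    have h3 := Real.rpow_le_rpow hν hνle hr
    have h4 : (St.q⁻¹ ^ n) ^ r = (St.q ^ (r * (n : ℝ)))⁻¹ := by
      rw [inv_pow, Real.inv_rpow (by positivity), ← Real.rpow_natCast, ← Real.rpow_mul hq.le,
        mul_comm]
    rw [h4] at h3
    rw [← le_div_iff₀ (by positivity), div_eq_mul_inv]
    exact h1.trans (mul_le_mul_of_nonneg_left h3 hN0)

/-! ### Surjectivity -/

/-- The representative of `z` in `A_n`. -/
def rp (St : Setting S O E) (R : RepSystem St) (n : ℕ) (z : O) : O := (R.hrep n z).choose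

theorem rp_mem (St : Setting S O E) (R : RepSystem St) (n : ℕ) (z : O) : rp St R n z ∈ R.A n :=
  (R.hrep n z).choose_spec.1.1

theorem rp_spec (St : Setting S O E) (R : RepSystem St) (n : ℕ) (z : O) :
    ∃ y, z = rp St R n z + St.ϖ ^ n * y :=
  (R.hrep n z).choose_spec.1.2

theorem rp_unique (St : Setting S O E) (R : RepSystem St) {n : ℕ} {z a : O} (ha : a ∈ R.A n)
    (h : ∃ y, z = a + St.ϖ ^ n * y) : a = rp St R n z :=
  (R.hrep n z).choose_spec.2 a ⟨ha, h⟩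

/-- Unnormalised coefficients. -/
def bc (St : Setting S O E) (R : RepSystem St) (N : ℕ) (D : (S → ℕ) → O → E) (a : O)
    (j : S → ℕ) : E :=
  if lA St R a = 0 then D j a / (mfact j : E) else
    RR St N D j (rp St R (lA St R a - 1) a) (a - rp St R (lA St R a - 1) a) *
      mpow St (St.ϖ ^ lA St R a) j

/-- Coefficients in the basis. -/
def BB (St : Setting S O E) (R : RepSystem St) (ρ : O →+* E) (r : ℝ) (D : (S → ℕ) → O → E)
    (x : O × (S → ℕ)) : E :=
  bc St R ⌊r⌋₊ D x.1 x.2 / ρ St.ϖ ^ ⌊(lA St R x.1 : ℝ) * r⌋₊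

/-- The error term at level `n`. -/
def gerr (St : Setting S O E) (R : RepSystem St) (N : ℕ) (f : O → E) (D : (S → ℕ) → O → E)
    (n : ℕ) (z : O) : E := epsTay St N f D (rp St R n z) (z - rp St R n z)

theorem rho_ne (St : Setting S O E) (ρ : O →+* E) (hρ : ∀ z : O, ‖ρ z‖ = St.ν z) :
    ρ St.ϖ ≠ 0 := by
  rw [← norm_pos_iff, hρ, St.ν_ϖ]
  have := q_pos St
  positivity

theorem BB_mul (St : Setting S O E) (R : RepSystem St) (ρ : O →+* E)
    (hρ : ∀ z : O, ‖ρ z‖ = St.ν z) (r : ℝ) (D : (S → ℕ) → O → E) (a : O) (j : S → ℕ) (w : O) :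
    BB St R ρ r D (a, j) * ebasis St R ρ r a j (a + St.ϖ ^ lA St R a * w) =
      bc St R ⌊r⌋₊ D a j * mpow St w j := by
  unfold BB ebasis
  rw [coeval_apply St (pi_ne St ρ hρ)]
  have := pow_ne_zero ⌊(lA St R a : ℝ) * r⌋₊ (rho_ne St ρ hρ)
  field_simp

theorem BB_mul_not (St : Setting S O E) (R : RepSystem St) (ρ : O →+* E)
    (r : ℝ) (D : (S → ℕ) → O → E) (a : O) (j : S → ℕ) (z : O)
    (h : ¬ ∃ w, z = a + St.ϖ ^ lA St R a * w) :
    BB St R ρ r D (a, j) * ebasis St R ρ r a j z = 0 := by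
  unfold ebasis
  rw [coeval_not St _ _ _ _ h]
  simp

theorem lA_zero (St : Setting S O E) (R : RepSystem St) : lA St R 0 = 0 := by
  have : (0 : O) ∈ R.A 0 := by rw [R.hA0]; simp
  have := lA_le St R this
  omega

theorem level_sum (St : Setting S O E) (R : RepSystem St) (ρ : O →+* E)
    (hρ : ∀ z : O, ‖ρ z‖ = St.ν z) (r : ℝ) (f : O → E) (D : (S → ℕ) → O → E)
    (n : ℕ) (z : O) :
    ∑ a ∈ R.A n, ∑ j ∈ Idx S ⌊r⌋₊, BB St R ρ r D (a, j) * ebasis St R ρ r a j z =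
      f z - gerr St R ⌊r⌋₊ f D n z := by
  induction n with
  | zero =>
    have h0 : (0 : O) = rp St R 0 z :=
      rp_unique St R (by rw [R.hA0]; simp) ⟨z, by simp⟩
    rw [R.hA0, Finset.sum_singleton]
    unfold gerr
    rw [← h0, epsTay_eq]
    simp only [sub_zero, zero_add, sub_sub_cancel]
    refine Finset.sum_congr rfl fun j _ => ?_
    have e := BB_mul St R ρ hρ r D 0 j z
    rw [lA_zero] at e
    simp only [pow_zero, one_mul, zero_add] at e
    rw [e]
    unfold bc
    rw [if_pos (lA_zero St R)]
  | succ n ih =>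
    rw [← Finset.sum_sdiff (R.hmono n), ih]
    have hl : ∀ a ∈ R.A (n + 1) \ R.A n, lA St R a = n + 1 := by
      intro a ha
      rw [Finset.mem_sdiff] at ha
      have h1 := lA_le St R ha.1
      have h2 : ¬ lA St R a ≤ n := fun h => ha.2 ((mem_A_iff St R (mem_Aall St R ha.1)).mpr h)
      omega
    have hother : ∀ a ∈ R.A (n + 1) \ R.A n, a ≠ rp St R (n + 1) z →
        ∑ j ∈ Idx S ⌊r⌋₊, BB St R ρ r D (a, j) * ebasis St R ρ r a j z = 0 := by
      intro a ha hne
      refine Finset.sum_eq_zero fun j _ => BB_mul_not St R ρ r D a j z ?_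
      rw [hl a ha]
      exact fun h => hne (rp_unique St R (Finset.mem_sdiff.mp ha).1 h)
    obtain ⟨w, hw⟩ := rp_spec St R (n + 1) z
    by_cases hmem : rp St R (n + 1) z ∈ R.A n
    · have heq : rp St R (n + 1) z = rp St R n z :=
        rp_unique St R hmem ⟨St.ϖ * w, by rw [← mul_assoc, ← pow_succ]; exact hw⟩
      rw [Finset.sum_eq_zero, zero_add]
      · unfold gerr
        rw [heq]
      · intro a ha
        apply hother a ha
        rintro rfl
        exact (Finset.mem_sdiff.mp ha).2 hmem
    · have ha0 : rp St R (n + 1) z ∈ R.A (n + 1) \ R.A n :=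
        Finset.mem_sdiff.mpr ⟨rp_mem St R _ _, hmem⟩
      rw [Finset.sum_eq_single_of_mem _ ha0 hother]
      set a := rp St R (n + 1) z with ha
      have hla := hl a ha0
      have hrp : rp St R n a = rp St R n z := by
        obtain ⟨y, hy⟩ := rp_spec St R n a
        refine rp_unique St R (rp_mem St R n a) ⟨y + St.ϖ * w, ?_⟩
        rw [mul_add, ← mul_assoc, ← pow_succ, ← add_assoc, ← hy]
        exact hw
      have e : ∑ j ∈ Idx S ⌊r⌋₊, BB St R ρ r D (a, j) * ebasis St R ρ r a j z =
          ∑ j ∈ Idx S ⌊r⌋₊, RR St ⌊r⌋₊ D j (rp St R n z) (a - rp St R n z) *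
            mpow St (St.ϖ ^ (n + 1) * w) j := by
        refine Finset.sum_congr rfl fun j _ => ?_
        have e1 := BB_mul St R ρ hρ r D a j w
        rw [hla, ← hw] at e1
        rw [e1]
        unfold bc
        rw [if_neg (by omega), hla, Nat.add_sub_cancel, hrp, mpow_mul]
        ring
      rw [e, sum_RR St ⌊r⌋₊ f]
      unfold gerr
      rw [← ha]
      have e2 : a - rp St R n z + St.ϖ ^ (n + 1) * w = z - rp St R n z := by
        linear_combination -hw
      have e3 : rp St R n z + (a - rp St R n z) = a := by ring
      have e4 : St.ϖ ^ (n + 1) * w = z - a := by linear_combination -hw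
      rw [e2, e3, e4]
      ring

theorem BB_bound (St : Setting S O E) (R : RepSystem St) (ρ : O →+* E)
    (hρ : ∀ z : O, ‖ρ z‖ = St.ν z) (r : ℝ) (hr : 0 ≤ r) : ∃ c : ℝ, 0 ≤ c ∧
    ∀ (f : O → E) (D : (S → ℕ) → O → E) (n : ℕ) (T : ℝ),
      (∀ x z, ‖epsTay St ⌊r⌋₊ f D x (St.ϖ ^ n * z)‖ * St.q ^ (r * (n : ℝ)) ≤ T) →
      ∀ a, lA St R a = n + 1 → ∀ j ∈ Idx S ⌊r⌋₊, ‖BB St R ρ r D (a, j)‖ ≤ c * T := by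
  obtain ⟨c, hc, H⟩ := RR_bound St ⌊r⌋₊
  have hq := q_pos St
  refine ⟨c * St.q ^ r, by positivity, fun f D n T hT a ha j hj => ?_⟩
  have hT0 : 0 ≤ T := (hT 0 0).trans' (by positivity)
  obtain ⟨y, hy⟩ := rp_spec St R n a
  have h1 := H f D n (T * (St.q ^ (r * (n : ℝ)))⁻¹) (fun x z => by
    rw [← div_eq_mul_inv, le_div_iff₀ (by positivity)]
    exact hT x z) (rp St R n a) y j hj
  have e1 : St.ϖ ^ n * y = a - rp St R n a := by linear_combination -hy
  rw [e1] at h1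
  have h2 : ‖bc St R ⌊r⌋₊ D a j‖ ≤ c * (T * (St.q ^ (r * (n : ℝ)))⁻¹) := by
    unfold bc
    rw [if_neg (by omega), ha, Nat.add_sub_cancel, norm_mul, mpow_pi_norm, ← pow_mul, inv_pow,
      ← div_eq_mul_inv, div_le_iff₀ (by positivity)]
    refine h1.trans (mul_le_mul_of_nonneg_left ?_ (by positivity))
    exact pow_le_pow_right₀ (one_lt_q St).le (Nat.mul_le_mul_right _ (Nat.le_succ n))
  unfold BB
  simp only
  rw [norm_div]
  have h3 := rho_floor_ge St ρ hρ ((lA St R a : ℝ) * r) (by positivity)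
  calc _ ≤ (c * (T * (St.q ^ (r * (n : ℝ)))⁻¹)) / St.q ^ (-((lA St R a : ℝ) * r)) :=
        div_le_div₀ (by positivity) h2 (by positivity) h3
    _ = c * St.q ^ r * T := by
        rw [ha, Real.rpow_neg hq.le]
        have : St.q ^ (((n + 1 : ℕ) : ℝ) * r) = St.q ^ (r * (n : ℝ)) * St.q ^ r := by
          rw [← Real.rpow_add hq]; push_cast; ring_nf
        rw [this]
        have : St.q ^ (r * (n : ℝ)) ≠ 0 := by positivity
        field_simp

theorem BB_zero (St : Setting S O E) (R : RepSystem St) (ρ : O →+* E)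
    (r : ℝ) (D : (S → ℕ) → O → E) (a : O) (h : lA St R a = 0) (j : S → ℕ) :
    BB St R ρ r D (a, j) = D j a / (mfact j : E) := by
  unfold BB bc
  simp [h]

theorem BB_vanish (St : Setting S O E) (R : RepSystem St) (ρ : O →+* E)
    (J : Set S) (d : S → ℕ) (r : ℝ) (hr : 0 ≤ r)
    (f : O → E) (D : (S → ℕ) → O → E) (h : IsCrWith St r f D)
    (hD : ∀ s ∉ Jp J d r, D (Pi.single s (d s + 1)) = 0) (a : O) (j : S → ℕ)
    (hj : j ∈ Idx S ⌊r⌋₊) (hY : ¬ ∀ s ∉ Jp J d r, j s ≤ d s) : BB St R ρ r D (a, j) = 0 := by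
  push Not at hY
  obtain ⟨s, hs, hlt⟩ := hY
  have hle : (Pi.single s (d s + 1) : S → ℕ) ≤ j := by
    intro t
    by_cases hts : t = s
    · subst hts; simpa using hlt
    · simp [Pi.single_eq_of_ne hts]
  have hmem : (Pi.single s (d s + 1) : S → ℕ) ∈ Idx S ⌊r⌋₊ :=
    mem_Idx.mpr ((wt_mono hle).trans (mem_Idx.mp hj))
  have hv := fun i hi hji x => D_vanish St r hr f D h _ hmem (hD s hs) i hi
    (hle.trans hji) x
  have hR : ∀ x y, RR St ⌊r⌋₊ D j x y = 0 := by
    intro x y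
    unfold RR
    rw [hv j hj le_rfl, zero_div, zero_sub, neg_eq_zero]
    refine Finset.sum_eq_zero fun i hi => ?_
    by_cases hji : j ≤ i
    · rw [hv i hi hji]; simp
    · rw [mchoose_eq_zero hji]; simp
  unfold BB bc
  simp only
  rw [hR, hv j hj le_rfl]
  simp

/-- The finite set of indices of level at most `n`. -/
def FF (St : Setting S O E) (R : RepSystem St) (J : Set S) (d : S → ℕ) (r : ℝ) (n : ℕ) :
    Finset (Ix St R J d r) :=
  (R.A n ×ˢ Idx S ⌊r⌋₊).subtype
    (fun x : O × (S → ℕ) => x.1 ∈ Aall St R ∧ x.2 ∈ Idx S ⌊r⌋₊ ∧ ∀ s ∉ Jp J d r, x.2 s ≤ d s)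

theorem mem_FF (St : Setting S O E) (R : RepSystem St) (J : Set S) (d : S → ℕ) (r : ℝ) (n : ℕ)
    (x : Ix St R J d r) : x ∈ FF St R J d r n ↔ lA St R x.1.1 ≤ n := by
  unfold FF
  rw [Finset.mem_subtype, Finset.mem_product, mem_A_iff St R x.2.1]
  exact ⟨fun h => h.1, fun h => ⟨h, x.2.2.1⟩⟩

theorem part2 (St : Setting S O E) (R : RepSystem St) (ρ : O →+* E)
    (hρ : ∀ z : O, ‖ρ z‖ = St.ν z) (J : Set S) (d : S → ℕ) (r : ℝ) (hr : 0 ≤ r) :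
    ∃ C₂ : ℝ, 0 ≤ C₂ ∧ ∀ (f : O → E) (D : (S → ℕ) → O → E), IsCrWith St r f D →
        (∀ s ∉ Jp J d r, D (Pi.single s (d s + 1)) = 0) →
        ∃ b : Ix St R J d r → E,
          c0Fun b ∧
          (∀ z : O, f z = ∑' x, b x * ebasis St R ρ r x.1.1 x.1.2 z) ∧
          (⨆ x, ‖b x‖) ≤ C₂ * CrNorm St r f D := by
  obtain ⟨c, hc, H⟩ := BB_bound St R ρ hρ r hr
  have hq := q_pos St
  refine ⟨max 1 c, by positivity, fun f D h hD => ?_⟩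
  have hc0 : c0Fun (fun x : Ix St R J d r => BB St R ρ r D x.1) := by
    intro ε hε
    obtain ⟨M, hM⟩ := h.2 (ε / (2 * (c + 1))) (by positivity)
    refine (FF St R J d r M).finite_toSet.subset fun x hx => ?_
    rw [Finset.mem_coe, mem_FF]
    by_contra hlt
    have hl : lA St R x.1.1 = (lA St R x.1.1 - 1) + 1 := by omega
    have h1 := H f D (lA St R x.1.1 - 1) (ε / (2 * (c + 1)))
      (fun y z => hM _ (by omega) y z) x.1.1 hl x.1.2 x.2.2.1
    have h2 : ε ≤ ‖BB St R ρ r D x.1‖ := hx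
    have h3 : c * (ε / (2 * (c + 1))) < ε := by
      rw [← mul_div_assoc, div_lt_iff₀ (by positivity)]
      nlinarith
    exact absurd (h2.trans h1) (not_le.mpr h3)
  have hCr : ∀ a ∈ R.A 0, 0 ≤ CrNorm St r f D := fun a _ =>
    (norm_nonneg _).trans (D_le_CrNorm St r f D h 0 (mem_Idx.mpr (by simp [wt])) 0)
  have hCr0 : 0 ≤ CrNorm St r f D :=
    (norm_nonneg _).trans (D_le_CrNorm St r f D h 0 (mem_Idx.mpr (by simp [wt])) 0)
  refine ⟨fun x => BB St R ρ r D x.1, hc0, fun z => ?_, ?_⟩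
  · have hs : Summable fun k : Ix St R J d r =>
        BB St R ρ r D k.1 * ebasis St R ρ r k.1.1 k.1.2 z :=
      summable_c0 St _ _ hc0 St.q fun k => ebasis_norm' St R ρ hρ r hr _ _ _
    have hF : Filter.Tendsto (FF St R J d r) Filter.atTop Filter.atTop := by
      apply Filter.tendsto_atTop_finset_of_monotone
      · intro m n hmn x hx
        rw [mem_FF] at hx ⊢
        exact hx.trans hmn
      · intro x
        exact ⟨_, (mem_FF St R J d r _ x).mpr le_rfl⟩
    have h1 := hs.hasSum.comp hF
    have hG : ∀ n, ∑ k ∈ FF St R J d r n, BB St R ρ r D k.1 * ebasis St R ρ r k.1.1 k.1.2 z =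
        f z - gerr St R ⌊r⌋₊ f D n z := by
      intro n
      rw [← level_sum St R ρ hρ r f D n z, ← Finset.sum_product']
      unfold FF
      rw [Finset.sum_subtype_eq_sum_filter
        (f := fun x : O × (S → ℕ) => BB St R ρ r D x * ebasis St R ρ r x.1 x.2 z)]
      apply Finset.sum_filter_of_ne
      intro x hx hne
      rw [Finset.mem_product] at hx
      refine ⟨mem_Aall St R hx.1, hx.2, ?_⟩
      by_contra hY
      apply hne
      rw [BB_vanish St R ρ J d r hr f D h hD x.1 x.2 hx.2 hY, zero_mul]
    have hg : Filter.Tendsto (fun n => gerr St R ⌊r⌋₊ f D n z) Filter.atTop (nhds 0) := by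
      rw [Metric.tendsto_atTop]
      intro ε hε
      obtain ⟨M, hM⟩ := h.2 (ε / 2) (by positivity)
      refine ⟨M, fun n hn => ?_⟩
      rw [dist_zero_right]
      obtain ⟨y, hy⟩ := rp_spec St R n z
      have h2 := hM n hn (rp St R n z) y
      have e1 : St.ϖ ^ n * y = z - rp St R n z := by linear_combination -hy
      rw [e1] at h2
      have h3 : 1 ≤ St.q ^ (r * (n : ℝ)) := Real.one_le_rpow (one_lt_q St).le (by positivity)
      have h4 := (le_mul_of_one_le_right (norm_nonneg _) h3).trans h2
      unfold gerr
      linarith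
    have h2 : Filter.Tendsto (fun n => f z - gerr St R ⌊r⌋₊ f D n z) Filter.atTop
        (nhds (f z)) := by
      simpa using hg.const_sub (f z)
    refine tendsto_nhds_unique h2 (h1.congr fun n => ?_)
    exact hG n
  · have hnn : 0 ≤ max 1 c * CrNorm St r f D := by positivity
    refine Real.iSup_le (fun x => ?_) hnn
    by_cases hl : lA St R x.1.1 = 0
    · have e := BB_zero St R ρ r D x.1.1 hl x.1.2
      change ‖BB St R ρ r D (x.1.1, x.1.2)‖ ≤ _
      rw [e]
      refine (D_le_CrNorm St r f D h _ x.2.2.1 _).trans ?_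
      exact le_mul_of_one_le_left hCr0 (le_max_left _ _)
    · have h1 := H f D (lA St R x.1.1 - 1) (CrNorm St r f D)
        (fun y z => eps_le_CrNorm St ρ hρ r hr f D h _ y z) x.1.1 (by omega) x.1.2 x.2.2.1
      exact h1.trans (mul_le_mul_of_nonneg_right (le_max_right _ _) hCr0)

/-- the family `(e_{a,i,r})_{a ∈ A, i ∈ Y' ∩ I_{≤[r]}}` is a Banach basis of
the closed subspace `C^r(O, J', (d_σ)_{σ∈S∖J'})` of `C^r(O,E)` cut out by the equations
`∂^{d_σ+1}/∂z_σ^{d_σ+1} f = 0` for `σ ∉ J'`: the map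
`c₀(A × (Y' ∩ I_{≤[r]})) → C^r(O, J', (d_σ))`, `(b_{a,i}) ↦ ∑ b_{a,i} e_{a,i,r}`, is an
isomorphism of Banach spaces. -/
theorem statement15 (St : Setting S O E) (R : RepSystem St) (ρ : O →+* E)
    (hρ : ∀ z : O, ‖ρ z‖ = St.ν z) (J : Set S) (d : S → ℕ) (r : ℝ) (hr : 0 ≤ r) :
    ∃ C₁ C₂ : ℝ, 0 ≤ C₁ ∧ 0 ≤ C₂ ∧
      (∀ b : {x : O × (S → ℕ) //
          x.1 ∈ Aall St R ∧ x.2 ∈ Idx S ⌊r⌋₊ ∧ ∀ s ∉ Jp J d r, x.2 s ≤ d s} → E,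
        c0Fun b →
        ∃ D, IsCrWith St r (fun z => ∑' x, b x * ebasis St R ρ r x.1.1 x.1.2 z) D ∧
          (∀ s ∉ Jp J d r, D (Pi.single s (d s + 1)) = 0) ∧
          CrNorm St r (fun z => ∑' x, b x * ebasis St R ρ r x.1.1 x.1.2 z) D ≤
            C₁ * ⨆ x, ‖b x‖) ∧
      (∀ (f : O → E) (D : (S → ℕ) → O → E), IsCrWith St r f D →
        (∀ s ∉ Jp J d r, D (Pi.single s (d s + 1)) = 0) →
        ∃ b : {x : O × (S → ℕ) //
            x.1 ∈ Aall St R ∧ x.2 ∈ Idx S ⌊r⌋₊ ∧ ∀ s ∉ Jp J d r, x.2 s ≤ d s} → E,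
          c0Fun b ∧
          (∀ z : O, f z = ∑' x, b x * ebasis St R ρ r x.1.1 x.1.2 z) ∧
          (⨆ x, ‖b x‖) ≤ C₂ * CrNorm St r f D) ∧
      (∀ b₁ b₂ : {x : O × (S → ℕ) //
          x.1 ∈ Aall St R ∧ x.2 ∈ Idx S ⌊r⌋₊ ∧ ∀ s ∉ Jp J d r, x.2 s ≤ d s} → E,
        c0Fun b₁ → c0Fun b₂ →
        (∀ z : O, (∑' x, b₁ x * ebasis St R ρ r x.1.1 x.1.2 z) =
          ∑' x, b₂ x * ebasis St R ρ r x.1.1 x.1.2 z) →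
        b₁ = b₂) := by
  obtain ⟨C₂, hC₂, H⟩ := part2 St R ρ hρ J d r hr
  refine ⟨St.q, C₂, (q_pos St).le, hC₂, fun b hb => ?_, H, fun b₁ b₂ h₁ h₂ h => ?_⟩
  · exact ⟨DD St R ρ J d r b, part1 St R ρ hρ J d r hr b hb⟩
  · exact part3 St R ρ hρ J d r hr b₁ b₂ h₁ h₂ h

end CrPaper
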